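/- Assume in addition that for each fixed x ∈ a the map λ ↦ G_λ(x) is holomorphic on h (which holds for the Heckman–Opdam family). Then for all M, N ∈ ℕ there exists a constant C > 0 such that for every λ ∈ h, every x ∈ a, all unit vectors η₁, …, η_M ∈ a (directions in the λ-variable) and all unit vectors ξ₁, …, ξ_N ∈ a (directions in the x-variable), | ∂^{(λ)}_{η₁} ⋯ ∂^{(λ)}_{η_M} ∂^{(x)}_{ξ₁} ⋯ ∂^{(x)}_{ξ_N} G_λ(x) | ≤ C (1 + |x|)^M (1 + |λ|)^N F_0(x) e^{max_{w∈W} Re (wλ, x)}. -/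

import Mathlib

open scoped BigOperators RealInnerProductSpace Classical

noncomputable section

variable {E : Type*} [NormedAddCommGroup E] [InnerProductSpace ℝ E] [FiniteDimensional ℝ E]

/-- The coroot `α∨ = 2α/|α|²`. -/
def coroot (α : E) : E := (2 / ⟪α, α⟫) • α

/-- The orthogonal reflection `r_α x = x - (α∨, x) α`. -/
def rRefl (α : E) (x : E) : E := x - ⟪coroot α, x⟫ • α

/-- Data of an integral root system with positive subsystem and
a Weyl-invariant positive multiplicity function. -/
structure HOData (E : Type*) [NormedAddCommGroup E] [InnerProductSpace ℝ E] : Type _ where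
  R : Finset E
  Rpos : Finset E
  k : E → ℝ
  k_pos : ∀ α ∈ R, 0 < k α
  root_ne_zero : ∀ α ∈ R, α ≠ 0
  pos_subset : Rpos ⊆ R
  pos_char : ∃ u : E, ∀ α ∈ R, (α ∈ Rpos ↔ 0 < ⟪α, u⟫)
  pos_or_neg : ∀ α ∈ R, α ∈ Rpos ∨ -α ∈ Rpos
  neg_mem : ∀ α ∈ R, -α ∈ R
  integral : ∀ α ∈ R, ∀ β ∈ R, ∃ n : ℤ, ⟪coroot α, β⟫ = (n : ℝ)
  refl_mem : ∀ α ∈ R, ∀ β ∈ R, rRefl α β ∈ R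
  k_inv : ∀ α ∈ R, ∀ β ∈ R, k (rRefl α β) = k β

/-- The Weyl group: the subgroup of linear isometries generated by the root reflections. -/
def weylGroup (D : HOData E) : Subgroup (E ≃ₗᵢ[ℝ] E) :=
  Subgroup.closure {w : E ≃ₗᵢ[ℝ] E | ∃ α ∈ D.R, ∀ x, w x = rRefl α x}

/-- `ρ = (1/2) Σ_{α ∈ R⁺} k_α α`. -/
def rhoHO (D : HOData E) : E := (2:ℝ)⁻¹ • ∑ α ∈ D.Rpos, D.k α • α

/-- Regular points. -/
def HORegular (D : HOData E) (x : E) : Prop := ∀ α ∈ D.R, ⟪α, x⟫ ≠ 0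

/-- The (open) positive Weyl chamber. -/
def posChamber (D : HOData E) : Set E := {x | ∀ α ∈ D.Rpos, 0 < ⟪α, x⟫}

/-- The positive indivisible roots `R₀⁺`. -/
def Rpos0 (D : HOData E) : Finset E := D.Rpos.filter (fun α => (2:ℝ)⁻¹ • α ∉ D.R)

/-- The Opdam function `G_λ` for a real parameter `λ`: an analytic function,
normalized at `0`, satisfying the Cherednik differential-difference system. -/
def IsOpdamR (D : HOData E) (lam : E) (G : E → ℝ) : Prop :=
  AnalyticOnNhd ℝ G Set.univ ∧ G 0 = 1 ∧
  ∀ ξ x, HORegular D x →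
    fderiv ℝ G x ξ =
      (∑ α ∈ D.Rpos, D.k α * ⟪α, ξ⟫ / (1 - Real.exp (-⟪α, x⟫)) * (G (rRefl α x) - G x))
      + ⟪rhoHO D + lam, ξ⟫ * G x

/-- The Opdam function `G_λ` for a complex parameter `λ = l1 + i l2 ∈ h`. -/
def IsOpdamC (D : HOData E) (l1 l2 : E) (G : E → ℂ) : Prop :=
  AnalyticOnNhd ℝ G Set.univ ∧ G 0 = 1 ∧
  ∀ ξ x, HORegular D x →
    fderiv ℝ G x ξ =
      (∑ α ∈ D.Rpos, ((D.k α * ⟪α, ξ⟫ / (1 - Real.exp (-⟪α, x⟫)) : ℝ) : ℂ)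
          * (G (rRefl α x) - G x))
      + (((⟪rhoHO D + l1, ξ⟫ : ℝ) : ℂ) + Complex.I * ((⟪l2, ξ⟫ : ℝ) : ℂ)) * G x

/-- The symmetrization `F(x) = |W|⁻¹ Σ_{w ∈ W} G(w x)` (real valued case). -/
def Fsym (D : HOData E) [Fintype (weylGroup D)] (G : E → ℝ) (x : E) : ℝ :=
  (Fintype.card (weylGroup D) : ℝ)⁻¹ * ∑ w : weylGroup D, G (w.1 x)

/-- The symmetrization `F(x) = |W|⁻¹ Σ_{w ∈ W} G(w x)` (complex valued case). -/
def FsymC (D : HOData E) [Fintype (weylGroup D)] (G : E → ℂ) (x : E) : ℂ :=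
  (Fintype.card (weylGroup D) : ℂ)⁻¹ * ∑ w : weylGroup D, G (w.1 x)

/-- `max_{w ∈ W} (w λ, x)`. -/
def maxW (D : HOData E) [Fintype (weylGroup D)] (lam x : E) : ℝ :=
  ⨆ w : weylGroup D, ⟪w.1 lam, x⟫

set_option linter.unusedSectionVars false

open scoped ContDiff in
/-- Iterated derivatives of `f ∘ L` for a continuous linear functional `L` and a function `f`
of one real variable that is smooth on an open set. -/
theorem norm_iteratedFDeriv_comp_clm_le {V : Type*} [NormedAddCommGroup V] [NormedSpace ℝ V]
    {f : ℝ → ℝ} {U : Set ℝ} (hU : IsOpen U) (hf : ContDiffOn ℝ ∞ f U) (L : V →L[ℝ] ℝ)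
    {y : V} (hy : L y ∈ U) (j : ℕ) :
    ‖iteratedFDeriv ℝ j (fun z => f (L z)) y‖ ≤ |iteratedDeriv j f (L y)| * ‖L‖ ^ j := by
  have hpre : IsOpen (L ⁻¹' U) := hU.preimage L.continuous
  have h := L.iteratedFDerivWithin_comp_right (x := y) hf hU.uniqueDiffOn hpre.uniqueDiffOn hy
    (i := j) (by exact_mod_cast le_top)
  rw [iteratedFDerivWithin_of_isOpen j hpre hy, iteratedFDerivWithin_of_isOpen j hU hy] at h
  have h' : iteratedFDeriv ℝ j (fun z => f (L z)) y = iteratedFDeriv ℝ j (f ∘ L) y := rfl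
  rw [h', h]
  refine (ContinuousMultilinearMap.norm_compContinuousLinearMap_le _ _).trans ?_
  rw [norm_iteratedFDeriv_eq_norm_iteratedDeriv, Real.norm_eq_abs]
  simp

/-- The function `s ↦ 1 / (1 - e^{-s})`. -/
def psiHO (s : ℝ) : ℝ := (1 - Real.exp (-s))⁻¹

/-- The entire extension of `s ↦ s / (1 - e^{-s})` to `s = 0`. -/
def phiHO (s : ℝ) : ℝ := (dslope (fun u : ℝ => 1 - Real.exp (-u)) 0 s)⁻¹

theorem one_sub_exp_neg_ne_zero {s : ℝ} (hs : s ≠ 0) : 1 - Real.exp (-s) ≠ 0 := by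
  intro h
  have : Real.exp (-s) = 1 := by linarith
  rw [Real.exp_eq_one_iff] at this
  exact hs (by linarith)

theorem dslope_one_sub_exp_neg_pos (s : ℝ) :
    0 < dslope (fun u : ℝ => 1 - Real.exp (-u)) 0 s := by
  rcases eq_or_ne s 0 with rfl | hs
  · have h : HasDerivAt (fun u : ℝ => 1 - Real.exp (-u)) (-(Real.exp (-0) * (-1))) (0 : ℝ) :=
      ((hasDerivAt_neg (0 : ℝ)).exp).const_sub 1
    rw [dslope_same, h.deriv]
    simp
  · rw [dslope_of_ne _ hs, slope_def_field]
    simp only [neg_zero, Real.exp_zero, sub_self, sub_zero]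
    rcases lt_or_gt_of_ne hs with h | h
    · exact div_pos_of_neg_of_neg (by linarith [Real.one_lt_exp_iff.2 (neg_pos.2 h)]) h
    · exact div_pos (by linarith [Real.exp_lt_one_iff.2 (neg_neg_of_pos h)]) h

theorem phiHO_nonneg (s : ℝ) : 0 ≤ phiHO s := (inv_pos.2 (dslope_one_sub_exp_neg_pos s)).le

theorem phiHO_of_ne_zero {s : ℝ} (hs : s ≠ 0) : phiHO s = s / (1 - Real.exp (-s)) := by
  rw [phiHO, dslope_of_ne _ hs, slope_def_field]
  simp

open scoped ContDiff in
theorem contDiff_phiHO : ContDiff ℝ ∞ phiHO := by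
  rw [contDiff_iff_contDiffAt]
  intro s
  refine ContDiffAt.inv ?_ (dslope_one_sub_exp_neg_pos s).ne'
  have hsm : ContDiff ℝ ∞ (fun u : ℝ => 1 - Real.exp (-u)) := by fun_prop
  rcases eq_or_ne s 0 with rfl | hs
  · have ha : AnalyticAt ℝ (fun u : ℝ => 1 - Real.exp (-u)) 0 := by fun_prop
    obtain ⟨p, hp⟩ := ha
    exact hp.has_fpower_series_dslope_fslope.analyticAt.contDiffAt
  · refine ContDiffAt.congr_of_eventuallyEq ?_ (dslope_eventuallyEq_slope_of_ne _ hs)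
    have : slope (fun u : ℝ => 1 - Real.exp (-u)) 0
        = fun u => ((1 - Real.exp (-u)) - (1 - Real.exp (-0))) / (u - 0) := by
      funext u
      rw [slope_def_field]
    rw [this]
    exact (hsm.contDiffAt.sub contDiffAt_const).div (by fun_prop) (by simpa using hs)

open scoped ContDiff in
theorem contDiffOn_psiHO : ContDiffOn ℝ ∞ psiHO {0}ᶜ := by
  intro s hs
  refine ContDiffAt.contDiffWithinAt (ContDiffAt.inv (by fun_prop) (one_sub_exp_neg_ne_zero hs))

theorem hasDerivAt_psiHO {s : ℝ} (hs : s ≠ 0) :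
    HasDerivAt psiHO (psiHO s - psiHO s ^ 2) s := by
  have h := ((((hasDerivAt_id s).neg).exp).const_sub 1).inv (one_sub_exp_neg_ne_zero hs)
  refine h.congr_deriv ?_
  have h0 := one_sub_exp_neg_ne_zero hs
  simp only [id, Pi.neg_apply, psiHO]
  field_simp
  ring

theorem abs_psiHO_le {s : ℝ} (hs : s ≠ 0) : |psiHO s| ≤ 1 + |s|⁻¹ := by
  have hs' : 0 < |s| := abs_pos.2 hs
  rw [psiHO, abs_inv]
  have key : |s| / (|s| + 1) ≤ |1 - Real.exp (-s)| := by
    rcases lt_or_gt_of_ne hs with h | h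
    · have h1 := Real.add_one_le_exp (-s)
      rw [abs_of_neg h, abs_of_neg (by linarith), div_le_iff₀ (by linarith)]
      nlinarith
    · have h1 := Real.add_one_le_exp s
      have h2 : Real.exp (-s) ≤ 1 / (s + 1) := by
        rw [Real.exp_neg, ← one_div]
        exact one_div_le_one_div_of_le (by linarith) h1
      have h3 : s / (s + 1) = 1 - 1 / (s + 1) := by field_simp; ring
      rw [abs_of_pos h, abs_of_pos (by linarith [Real.exp_lt_one_iff.2 (neg_neg_of_pos h)]), h3]
      linarith
  calc |1 - Real.exp (-s)|⁻¹ ≤ (|s| / (|s| + 1))⁻¹ := inv_anti₀ (by positivity) key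
    _ = 1 + |s|⁻¹ := by field_simp

theorem exists_polynomial_iteratedDeriv_psiHO (j : ℕ) :
    ∃ P : Polynomial ℝ, P.natDegree ≤ j + 1 ∧
      ∀ s : ℝ, s ≠ 0 → iteratedDeriv j psiHO s = P.eval (psiHO s) := by
  induction j with
  | zero => exact ⟨Polynomial.X, by simp, fun s _ => by simp⟩
  | succ j ih =>
    obtain ⟨P, hP, hPs⟩ := ih
    refine ⟨Polynomial.derivative P * (Polynomial.X - Polynomial.X ^ 2), ?_, ?_⟩
    · refine Polynomial.natDegree_mul_le.trans ?_
      have h1 := Polynomial.natDegree_derivative_le P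
      have h2 : (Polynomial.X - Polynomial.X ^ 2 : Polynomial ℝ).natDegree ≤ 2 := by
        compute_degree
      omega
    · intro s hs
      rw [iteratedDeriv_succ]
      have he : iteratedDeriv j psiHO =ᶠ[nhds s] fun u => P.eval (psiHO u) := by
        filter_upwards [isOpen_ne.mem_nhds hs] with u hu using hPs u hu
      rw [he.deriv_eq]
      have h := (P.hasDerivAt (psiHO s)).comp s (hasDerivAt_psiHO hs)
      refine h.deriv.trans ?_
      simp

/-- Derivatives of `ψ` up to any order blow up at most polynomially in `1/|s|`. -/
theorem exists_iteratedDeriv_psiHO_le (j : ℕ) :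
    ∃ C : ℝ, 0 ≤ C ∧ ∀ s : ℝ, s ≠ 0 → |iteratedDeriv j psiHO s| ≤ C * (1 + |s|⁻¹) ^ (j + 1) := by
  obtain ⟨P, hP, hPs⟩ := exists_polynomial_iteratedDeriv_psiHO j
  refine ⟨∑ i ∈ Finset.range (P.natDegree + 1), |P.coeff i|, by positivity, fun s hs => ?_⟩
  rw [hPs s hs, Polynomial.eval_eq_sum_range, Finset.sum_mul]
  refine (Finset.abs_sum_le_sum_abs _ _).trans (Finset.sum_le_sum fun i hi => ?_)
  rw [abs_mul, abs_pow]
  have h1 : (1 : ℝ) ≤ 1 + |s|⁻¹ := by have := abs_nonneg s; simp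
  gcongr
  calc |psiHO s| ^ i ≤ (1 + |s|⁻¹) ^ i := by gcongr; exact abs_psiHO_le hs
    _ ≤ (1 + |s|⁻¹) ^ (j + 1) :=
      pow_le_pow_right₀ h1 (by have := Finset.mem_range.1 hi; omega)

theorem exists_iteratedDeriv_phiHO_le (j : ℕ) (K : ℝ) :
    ∃ C : ℝ, 0 ≤ C ∧ ∀ s : ℝ, |s| ≤ K → |iteratedDeriv j phiHO s| ≤ C := by
  have hc : Continuous (iteratedDeriv j phiHO) :=
    contDiff_phiHO.continuous_iteratedDeriv j (by exact_mod_cast le_top)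
  obtain ⟨C, hC⟩ := (isCompact_Icc (a := -K) (b := K)).exists_bound_of_continuousOn
    hc.continuousOn
  refine ⟨max C 0, le_max_right _ _, fun s hs => ?_⟩
  exact (hC s (abs_le.1 hs)).trans (le_max_left _ _)

section Calculus

open scoped ContDiff Topology

variable {V : Type*} [NormedAddCommGroup V] [NormedSpace ℝ V]
  {F : Type*} [NormedAddCommGroup F] [NormedSpace ℝ F]

/-- The Leibniz rule with the top order term separated out. -/
theorem norm_iteratedFDeriv_smul_sub_le {K : Type*} [NormedField K] [NormedAlgebra ℝ K]
    [NormedSpace K F] [IsScalarTower ℝ K F] [SMulCommClass ℝ K F]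
    {a : V → K} {g : V → F} {U : Set V} (hU : IsOpen U) (ha : ContDiffOn ℝ ∞ a U)
    (hg : ContDiff ℝ ∞ g) {y : V} (hy : y ∈ U) (N : ℕ) :
    ‖iteratedFDeriv ℝ N (fun z => a z • g z) y - a y • iteratedFDeriv ℝ N g y‖ ≤
      ∑ i ∈ Finset.range N, (N.choose (i + 1) : ℝ) * ‖iteratedFDeriv ℝ (i + 1) a y‖ *
        ‖iteratedFDeriv ℝ (N - (i + 1)) g y‖ := by
  have hN : ((N : ℕ∞ω)) ≤ ∞ := by exact_mod_cast le_top
  have hay : ContDiffAt ℝ ∞ a y := ha.contDiffAt (hU.mem_nhds hy)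
  have hsplit : (fun z => a z • g z) = (fun z => (a z - a y) • g z) + fun z => a y • g z := by
    funext z
    simp [sub_smul]
  have h1 : ContDiffAt ℝ N (fun z => (a z - a y) • g z) y :=
    ((hay.sub contDiffAt_const).smul hg.contDiffAt).of_le hN
  have h2 : ContDiffAt ℝ N (fun z => a y • g z) y := (hg.const_smul _).contDiffAt.of_le hN
  rw [hsplit, iteratedFDeriv_add_apply h1 h2]
  have h3 : iteratedFDeriv ℝ N (fun z => a y • g z) y = a y • iteratedFDeriv ℝ N g y :=
    iteratedFDeriv_const_smul_apply' (hg.contDiffAt.of_le hN)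
  rw [h3, add_sub_cancel_right]
  have h4 := norm_iteratedFDerivWithin_smul_le (𝕜 := ℝ) (f := fun z => a z - a y) (g := g)
    (ha.sub contDiffOn_const) hg.contDiffOn hU.uniqueDiffOn hy hN
  rw [iteratedFDerivWithin_of_isOpen N hU hy] at h4
  refine h4.trans ?_
  rw [Finset.sum_range_succ']
  have h0 : ‖iteratedFDerivWithin ℝ 0 (fun z => a z - a y) U y‖ = 0 := by
    rw [norm_iteratedFDerivWithin_zero]
    simp
  rw [h0]
  simp only [mul_zero, zero_mul, add_zero]
  refine Finset.sum_le_sum fun i _ => le_of_eq ?_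
  rw [iteratedFDerivWithin_of_isOpen (i + 1) hU hy, iteratedFDerivWithin_of_isOpen _ hU hy]
  congr 3
  have h5 : (fun z => a z - a y) = a - fun _ => a y := rfl
  rw [h5, iteratedFDeriv_sub_apply (hay.of_le (by exact_mod_cast le_top)) contDiffAt_const,
    iteratedFDeriv_const_of_ne (by omega)]
  simp

theorem contDiff_iteratedFDeriv_apply {g : V → F} (hg : ContDiff ℝ ∞ g) {N : ℕ} (ξ : Fin N → V) :
    ContDiff ℝ ∞ (fun z => iteratedFDeriv ℝ N g z ξ) :=
  (ContinuousMultilinearMap.apply ℝ (fun _ : Fin N => V) F ξ).contDiff.comp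
    (hg.iteratedFDeriv_right (m := ∞) (i := N) (by exact_mod_cast le_top))

theorem iteratedFDeriv_succ_apply_eq {g : V → F} (hg : ContDiff ℝ ∞ g) {N : ℕ}
    (ξ : Fin (N + 1) → V) (y : V) :
    iteratedFDeriv ℝ (N + 1) g y ξ =
      fderiv ℝ (fun z => iteratedFDeriv ℝ N g z (Fin.tail ξ)) y (ξ 0) := by
  refine DifferentiableAt.iteratedFDeriv_succ_apply_left' ?_
  exact (hg.differentiable_iteratedFDeriv
    (by exact_mod_cast ENat.natCast_lt_top N)).differentiableAt

/-- Commutation of iterated derivatives with the Euler field centered at `p`. -/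
theorem iteratedFDeriv_euler {g : V → F} (hg : ContDiff ℝ ∞ g) (p : V) (N : ℕ) (y : V)
    (ξ : Fin N → V) :
    iteratedFDeriv ℝ N (fun z => fderiv ℝ g z (z - p)) y ξ =
      fderiv ℝ (fun z => iteratedFDeriv ℝ N g z ξ) y (y - p) +
        (N : ℝ) • iteratedFDeriv ℝ N g y ξ := by
  have hE : ContDiff ℝ ∞ (fun z => fderiv ℝ g z (z - p)) :=
    (hg.fderiv_right (m := ∞) (by simp)).clm_apply (by fun_prop)
  induction N generalizing y with
  | zero => simp
  | succ n ih =>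
    have hu := contDiff_iteratedFDeriv_apply hg (Fin.tail ξ)
    set u := fun z => iteratedFDeriv ℝ n g z (Fin.tail ξ) with hu_def
    have hu' : ContDiff ℝ ∞ (fderiv ℝ u) := hu.fderiv_right (m := ∞) (by simp)
    have hsymm : IsSymmSndFDerivAt ℝ u y :=
      hu.contDiffAt.isSymmSndFDerivAt (by
        have h2 : (2 : ℕ∞ω) ≤ ∞ := WithTop.coe_le_coe.2 (le_top (a := (2 : ℕ∞)))
        simpa using h2)
    rw [iteratedFDeriv_succ_apply_eq hE]
    have h1 : (fun z => iteratedFDeriv ℝ n (fun z => fderiv ℝ g z (z - p)) z (Fin.tail ξ)) =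
        fun z => fderiv ℝ u z (z - p) + (n : ℝ) • u z := by
      funext z
      exact ih z (Fin.tail ξ)
    have h2 : (fun z => iteratedFDeriv ℝ (n + 1) g z ξ) = fun z => fderiv ℝ u z (ξ 0) := by
      funext z
      exact iteratedFDeriv_succ_apply_eq hg ξ z
    have hd' : HasFDerivAt (fderiv ℝ u) (fderiv ℝ (fderiv ℝ u) y) y :=
      (hu'.differentiable (by simp) y).hasFDerivAt
    have hd : HasFDerivAt u (fderiv ℝ u y) y := (hu.differentiable (by simp) y).hasFDerivAt
    have h3 := (hd'.clm_apply ((hasFDerivAt_id y).sub_const p)).add (hd.const_smul (n : ℝ))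
    have h4 := hd'.clm_apply (hasFDerivAt_const (ξ 0) y)
    have h3' : fderiv ℝ (fun z => fderiv ℝ u z (z - p) + (n : ℝ) • u z) y = _ := h3.fderiv
    have h5 := iteratedFDeriv_succ_apply_eq hg ξ y
    rw [h1, h2, h3', h4.fderiv, h5]
    simp only [add_apply, ContinuousLinearMap.comp_apply,
      ContinuousLinearMap.flip_apply, smul_apply, id,
      ContinuousLinearMap.id_apply, zero_apply, map_zero, zero_add]
    rw [hsymm (ξ 0) (y - p), Nat.cast_succ, add_smul, one_smul]
    abel

/-- A finite family of differentiable functions attains its maximum over `[0, 1]`, and the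
Euler derivative is nonnegative there. -/
theorem exists_max_unitInterval {ι : Type*} [Finite ι] [Nonempty ι] {f f' : ι → ℝ → ℝ}
    (h : ∀ i t, HasDerivAt (f i) (f' i t) t) :
    ∃ i, ∃ t ∈ Set.Icc (0 : ℝ) 1,
      (∀ j, ∀ s ∈ Set.Icc (0 : ℝ) 1, f j s ≤ f i t) ∧ 0 ≤ t * f' i t := by
  have hmax : ∀ i, ∃ t ∈ Set.Icc (0 : ℝ) 1, IsMaxOn (f i) (Set.Icc 0 1) t := fun i =>
    isCompact_Icc.exists_isMaxOn (Set.nonempty_Icc.2 zero_le_one)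
      fun t _ => (h i t).continuousAt.continuousWithinAt
  choose τ hτ hτmax using hmax
  obtain ⟨i, hi⟩ := Finite.exists_max fun i => f i (τ i)
  have hall : ∀ j, ∀ s ∈ Set.Icc (0 : ℝ) 1, f j s ≤ f i (τ i) :=
    fun j s hs => (hτmax j hs).trans (hi j)
  refine ⟨i, τ i, hτ i, hall, ?_⟩
  rcases (hτ i).1.eq_or_lt with h0 | h0
  · simp [← h0]
  · refine mul_nonneg h0.le ?_
    have hs := (hasDerivAt_iff_tendsto_slope.1 (h i (τ i))).mono_left
      (nhdsWithin_mono (τ i) (s := Set.Iio (τ i)) fun s hs => ne_of_lt hs)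
    refine ge_of_tendsto hs ?_
    filter_upwards [Ioo_mem_nhdsLT h0] with s hs
    rw [slope_def_field]
    exact div_nonneg_of_nonpos
      (sub_nonpos.2 (hall i s ⟨hs.1.le, hs.2.le.trans (hτ i).2⟩)) (sub_nonpos.2 hs.2.le)

end Calculus

section Holomorphic

open scoped ContDiff Topology

/-- Holomorphic functions of `l₁ + i l₂ ∈ E ⊗ ℂ`, as smooth functions of the pair `(l₁, l₂)`
which satisfy the Cauchy–Riemann equations. -/
structure HolCR (f : E × E → ℂ) : Prop where
  smooth : ContDiff ℝ ∞ f
  cauchyRiemann : ∀ (p : E × E) (η : E), fderiv ℝ f p (0, η) = Complex.I * fderiv ℝ f p (η, 0)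

namespace HolCR

theorem hasFDerivAt {f : E × E → ℂ} (hf : HolCR f) (p : E × E) :
    HasFDerivAt f (fderiv ℝ f p) p := (hf.smooth.differentiable (by simp) p).hasFDerivAt

theorem contDiff_fderiv {f : E × E → ℂ} (hf : HolCR f) : ContDiff ℝ ∞ (fderiv ℝ f) :=
  hf.smooth.fderiv_right (m := ∞) (by simp)

theorem hasFDerivAt_fderiv_apply {f : E × E → ℂ} (hf : HolCR f) (p v : E × E) :
    HasFDerivAt (fun q => fderiv ℝ f q v) ((fderiv ℝ (fderiv ℝ f) p).flip v) p := by
  have h := ((hf.contDiff_fderiv.differentiable (by simp) p).hasFDerivAt).clm_apply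
    (hasFDerivAt_const v p)
  simpa using h

theorem sub {f g : E × E → ℂ} (hf : HolCR f) (hg : HolCR g) : HolCR (fun p => f p - g p) := by
  refine ⟨hf.smooth.sub hg.smooth, fun p η => ?_⟩
  rw [((hf.hasFDerivAt p).fun_sub (hg.hasFDerivAt p)).fderiv, sub_apply,
    sub_apply, hf.cauchyRiemann, hg.cauchyRiemann]
  ring

theorem const_mul {f : E × E → ℂ} (hf : HolCR f) (c : ℂ) : HolCR (fun p => c * f p) := by
  refine ⟨contDiff_const.mul hf.smooth, fun p η => ?_⟩
  rw [((hf.hasFDerivAt p).const_mul c).fderiv, smul_apply, smul_apply, hf.cauchyRiemann]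
  simp only [smul_eq_mul]
  ring

theorem fderiv_apply_fst {f : E × E → ℂ} (hf : HolCR f) (η : E) :
    HolCR (fun p => fderiv ℝ f p (η, 0)) := by
  refine ⟨hf.contDiff_fderiv.clm_apply contDiff_const, fun p ζ => ?_⟩
  have hsymm : IsSymmSndFDerivAt ℝ f p :=
    hf.smooth.contDiffAt.isSymmSndFDerivAt (by
      have h2 : (2 : ℕ∞ω) ≤ ∞ := WithTop.coe_le_coe.2 (le_top (a := (2 : ℕ∞)))
      simpa using h2)
  have h1 : (fun q => fderiv ℝ f q (0, ζ)) = fun q => Complex.I * fderiv ℝ f q (ζ, 0) :=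
    funext fun q => hf.cauchyRiemann q ζ
  have h2 := (hf.hasFDerivAt_fderiv_apply p (0, ζ)).fderiv
  rw [h1, ((hf.hasFDerivAt_fderiv_apply p (ζ, 0)).const_mul Complex.I).fderiv] at h2
  have h3 := congrArg (fun L : E × E →L[ℝ] ℂ => L (η, 0)) h2
  simp only [smul_apply, ContinuousLinearMap.flip_apply, smul_eq_mul] at h3
  rw [(hf.hasFDerivAt_fderiv_apply p (η, 0)).fderiv, ContinuousLinearMap.flip_apply,
    ContinuousLinearMap.flip_apply, hsymm, ← h3, hsymm]

theorem fderiv_apply {f : E × E → ℂ} (hf : HolCR f) (v : E × E) :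
    HolCR (fun p => fderiv ℝ f p v) := by
  have h : (fun p => fderiv ℝ f p v) =
      fun p => fderiv ℝ f p (v.1, 0) - (-Complex.I) * fderiv ℝ f p (v.2, 0) := by
    funext p
    have hv : v = (v.1, 0) + (0, v.2) := by simp
    conv_lhs => rw [hv, map_add, hf.cauchyRiemann]
    ring
  rw [h]
  exact (hf.fderiv_apply_fst v.1).sub ((hf.fderiv_apply_fst v.2).const_mul _)

theorem hasDerivAt_line {f : E × E → ℂ} (hf : HolCR f) (p : E × E) (η : E) (z : ℂ) :
    HasDerivAt (fun z : ℂ => f (p + (z.re • η, z.im • η)))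
      (fderiv ℝ f (p + (z.re • η, z.im • η)) (η, 0)) z := by
  let L : ℂ →L[ℝ] E × E := (Complex.reCLM.smulRight η).prod (Complex.imCLM.smulRight η)
  have hL : HasFDerivAt (fun z : ℂ => p + (z.re • η, z.im • η)) L z :=
    (L.hasFDerivAt (x := z)).const_add p
  have h := (hf.hasFDerivAt (p + (z.re • η, z.im • η))).comp z hL
  rw [hasDerivAt_iff_hasFDerivAt]
  refine hasFDerivAt_of_restrictScalars ℝ h ?_
  ext w
  have hw : ((w.re • η, w.im • η) : E × E) = w.re • (η, 0) + w.im • (0, η) := by simp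
  simp only [ContinuousLinearMap.coe_restrictScalars', ContinuousLinearMap.toSpanSingleton_apply,
    ContinuousLinearMap.comp_apply, L, ContinuousLinearMap.prod_apply,
    ContinuousLinearMap.smulRight_apply, Complex.reCLM_apply, Complex.imCLM_apply, smul_eq_mul]
  rw [hw, map_add, map_smul, map_smul, hf.cauchyRiemann, Complex.real_smul, Complex.real_smul]
  conv_lhs => rw [← Complex.re_add_im w]
  ring

/-- The Cauchy estimate for a first derivative. -/
theorem norm_fderiv_apply_le {f : E × E → ℂ} (hf : HolCR f) {p : E × E} {η : E} {s B : ℝ}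
    (hs : 0 < s) (hB : ∀ q, ‖q - p‖ ≤ s * ‖η‖ → ‖f q‖ ≤ B) :
    ‖fderiv ℝ f p (η, 0)‖ ≤ B / s := by
  have h := hf.hasDerivAt_line p η 0
  simp only [Complex.zero_re, Complex.zero_im, zero_smul, Prod.mk_zero_zero, add_zero] at h
  rw [← h.deriv]
  refine Complex.norm_deriv_le_of_forall_mem_sphere_norm_le hs ?_ fun z hz => hB _ ?_
  · exact Differentiable.diffContOnCl fun z => (hf.hasDerivAt_line p η z).differentiableAt
  · have hz' : ‖z‖ = s := by simpa using hz
    rw [add_sub_cancel_left, Prod.norm_mk, norm_smul, norm_smul, ← hz']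
    refine max_le ?_ ?_
    · gcongr
      exact Complex.abs_re_le_norm z
    · gcongr
      exact Complex.abs_im_le_norm z

/-- The Cauchy estimate for higher derivatives along unit vectors. -/
theorem norm_iteratedFDeriv_le {f : E × E → ℂ} (hf : HolCR f) {M : ℕ} {l1 l2 : E} {η : Fin M → E}
    (hη : ∀ i, ‖η i‖ = 1) {s B : ℝ} (hs : 0 < s)
    (hB : ∀ q, ‖q - (l1, l2)‖ ≤ M * s → ‖f q‖ ≤ B) :
    ‖iteratedFDeriv ℝ M (fun l => f (l, l2)) l1 η‖ ≤ B / s ^ M := by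
  induction M generalizing f B with
  | zero => simpa using hB (l1, l2) (by simp)
  | succ M ih =>
    have hsm : ContDiff ℝ ∞ (fun l : E => f (l, l2)) := hf.smooth.comp (by fun_prop)
    rw [iteratedFDeriv_succ_apply_right]
    have h1 : iteratedFDeriv ℝ M (fun y => fderiv ℝ (fun l => f (l, l2)) y) l1 (Fin.init η)
          (η (Fin.last M)) =
        iteratedFDeriv ℝ M (fun l => fderiv ℝ f (l, l2) (η (Fin.last M), 0)) l1 (Fin.init η) := by
      have h2 : (fun l => fderiv ℝ f (l, l2) (η (Fin.last M), 0)) =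
          (ContinuousLinearMap.apply ℝ ℂ (η (Fin.last M))) ∘
            fun y => fderiv ℝ (fun l => f (l, l2)) y := by
        funext l
        have h3 : HasFDerivAt (fun l : E => f (l, l2)) _ l :=
          (hf.hasFDerivAt (l, l2)).comp l (hasFDerivAt_prodMk_left l l2)
        simp [h3.fderiv]
      rw [h2, ContinuousLinearMap.iteratedFDeriv_comp_left _
        ((hsm.fderiv_right (m := ∞) (by simp)).contDiffAt) (by exact_mod_cast le_top)]
      simp
    rw [h1]
    have h4 := ih (hf.fderiv_apply_fst (η (Fin.last M))) (η := Fin.init η) (B := B / s)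
      (fun i => hη _) fun q hq => hf.norm_fderiv_apply_le hs fun q' hq' => hB q' ?_
    · rw [pow_succ', ← div_div]
      exact h4
    · rw [hη, mul_one] at hq'
      have := norm_add_le (q' - q) (q - (l1, l2))
      rw [sub_add_sub_cancel] at this
      push_cast
      linarith

theorem norm_fderiv_le {f : E × E → ℂ} (hf : HolCR f) {p : E × E} {B : ℝ}
    (hB : ∀ q, ‖q - p‖ ≤ 1 → ‖f q‖ ≤ B) : ‖fderiv ℝ f p‖ ≤ 2 * B := by
  have hB0 : 0 ≤ B := (norm_nonneg _).trans (hB p (by simp))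
  have key : ∀ η : E, ‖fderiv ℝ f p (η, 0)‖ ≤ B * ‖η‖ := by
    intro η
    rcases eq_or_ne η 0 with rfl | hη
    · rw [Prod.mk_zero_zero, map_zero]
      simp
    · have hη' : 0 < ‖η‖ := norm_pos_iff.2 hη
      have h := hf.norm_fderiv_apply_le (p := p) (η := η) (s := ‖η‖⁻¹) (B := B) (by positivity)
        (by rwa [inv_mul_cancel₀ hη'.ne'])
      rwa [div_inv_eq_mul] at h
  refine ContinuousLinearMap.opNorm_le_bound _ (by positivity) fun v => ?_
  have hv : v = (v.1, 0) + (0, v.2) := by simp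
  calc ‖fderiv ℝ f p v‖ = ‖fderiv ℝ f p (v.1, 0) + Complex.I * fderiv ℝ f p (v.2, 0)‖ := by
        conv_lhs => rw [hv, map_add, hf.cauchyRiemann]
    _ ≤ ‖fderiv ℝ f p (v.1, 0)‖ + ‖fderiv ℝ f p (v.2, 0)‖ := by
        refine (norm_add_le _ _).trans ?_
        simp
    _ ≤ B * ‖v.1‖ + B * ‖v.2‖ := add_le_add (key _) (key _)
    _ ≤ B * ‖v‖ + B * ‖v‖ := by
        gcongr
        · exact norm_fst_le v
        · exact norm_snd_le v
    _ = 2 * B * ‖v‖ := by ring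

/-- Uniform Cauchy condition on bounded sets. -/
def CauchyOnBalls {X : Type*} [NormedAddCommGroup X] (F : ℕ → E × E → X) : Prop :=
  ∀ R : ℝ, ∀ ε : ℝ, 0 < ε → ∃ n₀ : ℕ, ∀ n ≥ n₀, ∀ m ≥ n₀, ∀ p : E × E, ‖p‖ ≤ R →
    ‖F n p - F m p‖ ≤ ε

theorem cauchyOnBalls_fderiv {F : ℕ → E × E → ℂ} (hF : ∀ n, HolCR (F n))
    (hC : CauchyOnBalls F) : CauchyOnBalls (fun n p => fderiv ℝ (F n) p) := by
  intro R ε hε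
  obtain ⟨n₀, h⟩ := hC (R + 1) (ε / 2) (by positivity)
  refine ⟨n₀, fun n hn m hm p hp => ?_⟩
  have h1 := ((hF n).sub (hF m)).norm_fderiv_le (p := p) (B := ε / 2) fun q hq =>
    h n hn m hm q (by
      have := norm_add_le (q - p) p
      rw [sub_add_cancel] at this
      linarith)
  rw [(((hF n).hasFDerivAt p).fun_sub ((hF m).hasFDerivAt p)).fderiv] at h1
  linarith

theorem exists_hasFDerivAt_of_tendsto {F : ℕ → E × E → ℂ} {f : E × E → ℂ}
    (hF : ∀ n, HolCR (F n)) (hC : CauchyOnBalls F)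
    (hlim : ∀ p, Filter.Tendsto (fun n => F n p) Filter.atTop (𝓝 (f p))) :
    (∀ p, HasFDerivAt f (fderiv ℝ f p) p) ∧
      ∀ p, Filter.Tendsto (fun n => fderiv ℝ (F n) p) Filter.atTop (𝓝 (fderiv ℝ f p)) := by
  have hC' := cauchyOnBalls_fderiv hF hC
  have hex : ∀ p, ∃ L, Filter.Tendsto (fun n => fderiv ℝ (F n) p) Filter.atTop (𝓝 L) := by
    intro p
    have hcs : CauchySeq fun n => fderiv ℝ (F n) p := by
      refine (Metric.cauchySeq_iff (α := E × E →L[ℝ] ℂ) (β := ℕ)).2 fun ε hε => ?_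
      obtain ⟨n₀, h⟩ := hC' ‖p‖ (ε / 2) (by positivity)
      refine ⟨n₀, fun n hn m hm => ?_⟩
      refine lt_of_le_of_lt (dist_eq_norm (fderiv ℝ (F n) p) (fderiv ℝ (F m) p)).le ?_
      linarith [h n hn m hm p le_rfl]
    exact cauchySeq_tendsto_of_complete hcs
  choose g hg using hex
  have hder : ∀ p, HasFDerivAt f (g p) p := by
    intro p
    refine hasFDerivAt_of_tendstoUniformlyOn (l := Filter.atTop) (f := F)
      (f' := fun n p => fderiv ℝ (F n) p) (Metric.isOpen_ball (x := (0 : E × E)) (ε := ‖p‖ + 1))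
      ?_ (fun n x _ => (hF n).hasFDerivAt x) (fun x _ => hlim x) (x := p) (by simp)
    refine UniformCauchySeqOn.tendstoUniformlyOn_of_tendsto ?_ fun x _ => hg x
    rw [Metric.uniformCauchySeqOn_iff]
    intro ε hε
    obtain ⟨n₀, h⟩ := hC' (‖p‖ + 1) (ε / 2) (by positivity)
    refine ⟨n₀, fun n hn m hm x hx => ?_⟩
    rw [dist_eq_norm]
    have := h n hn m hm x (by simpa using (mem_ball_zero_iff.1 hx).le)
    linarith
  refine ⟨fun p => (hder p).differentiableAt.hasFDerivAt, fun p => ?_⟩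
  rw [(hder p).fderiv]
  exact hg p

theorem cauchyOnBalls_fderiv_apply {F : ℕ → E × E → ℂ} (hF : ∀ n, HolCR (F n))
    (hC : CauchyOnBalls F) (v : E × E) : CauchyOnBalls (fun n p => fderiv ℝ (F n) p v) := by
  intro R ε hε
  obtain ⟨n₀, h⟩ := cauchyOnBalls_fderiv hF hC R (ε / (‖v‖ + 1)) (by positivity)
  refine ⟨n₀, fun n hn m hm p hp => ?_⟩
  rw [← sub_apply]
  refine (ContinuousLinearMap.le_opNorm _ _).trans ?_
  calc _ ≤ ε / (‖v‖ + 1) * ‖v‖ := by gcongr; exact h n hn m hm p hp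
    _ ≤ ε / (‖v‖ + 1) * (‖v‖ + 1) := by gcongr; linarith
    _ = ε := by field_simp

/-- A limit of holomorphic functions, uniform on bounded sets, is holomorphic. -/
theorem of_tendsto {F : ℕ → E × E → ℂ} {f : E × E → ℂ} (hF : ∀ n, HolCR (F n))
    (hC : CauchyOnBalls F)
    (hlim : ∀ p, Filter.Tendsto (fun n => F n p) Filter.atTop (𝓝 (f p))) : HolCR f := by
  have hsm : ∀ m : ℕ, ∀ (F : ℕ → E × E → ℂ) (f : E × E → ℂ), (∀ n, HolCR (F n)) →
      CauchyOnBalls F → (∀ p, Filter.Tendsto (fun n => F n p) Filter.atTop (𝓝 (f p))) →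
      ContDiff ℝ m f := by
    intro m
    induction m with
    | zero =>
      intro F f hF hC hlim
      have h := (exists_hasFDerivAt_of_tendsto hF hC hlim).1
      exact contDiff_zero.2 (continuous_iff_continuousAt.2 fun p => (h p).continuousAt)
    | succ m ih =>
      intro F f hF hC hlim
      obtain ⟨h1, h2⟩ := exists_hasFDerivAt_of_tendsto hF hC hlim
      rw [Nat.cast_succ, contDiff_succ_iff_fderiv_apply]
      refine ⟨fun p => (h1 p).differentiableAt, by simp, fun v => ?_⟩
      refine ih _ _ (fun n => (hF n).fderiv_apply v) (cauchyOnBalls_fderiv_apply hF hC v)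
        fun p => ?_
      exact ((ContinuousLinearMap.apply ℝ ℂ v).continuous.tendsto _).comp (h2 p)
  obtain ⟨h1, h2⟩ := exists_hasFDerivAt_of_tendsto hF hC hlim
  refine ⟨contDiff_infty.2 fun m => hsm m F f hF hC hlim, fun p η => ?_⟩
  have h3 := ((ContinuousLinearMap.apply ℝ ℂ ((0, η) : E × E)).continuous.tendsto _).comp (h2 p)
  have h4 := (((ContinuousLinearMap.apply ℝ ℂ ((η, 0) : E × E)).continuous.tendsto _).comp
    (h2 p)).const_mul Complex.I
  refine tendsto_nhds_unique h3 (h4.congr fun n => ?_)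
  simp [(hF n).cauchyRiemann]

end HolCR

end Holomorphic

section WeylGroup

open scoped ContDiff Topology

theorem reflection_eq_rRefl (α x : E) : (ℝ ∙ α)ᗮ.reflection x = rRefl α x := by
  rw [Submodule.reflection_orthogonal_apply, Submodule.reflection_singleton_apply, rRefl, coroot,
    real_inner_smul_left, real_inner_self_eq_norm_sq, neg_sub,
    ← Nat.cast_smul_eq_nsmul ℝ, smul_smul]
  congr 2
  simp
  ring

/-- The root reflection as an element of the Weyl group. -/
def weylRefl (D : HOData E) (α : E) : weylGroup D :=
  if h : α ∈ D.R then
    ⟨(ℝ ∙ α)ᗮ.reflection, Subgroup.subset_closure ⟨α, h, reflection_eq_rRefl α⟩⟩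
  else 1

theorem weylRefl_apply {D : HOData E} {α : E} (hα : α ∈ D.R) (x : E) :
    (weylRefl D α).1 x = rRefl α x := by
  rw [weylRefl, dif_pos hα]
  exact reflection_eq_rRefl α x

theorem weylRefl_mul_apply {D : HOData E} {α : E} (hα : α ∈ D.R) (w : weylGroup D) (x : E) :
    (weylRefl D α * w).1 x = rRefl α (w.1 x) := weylRefl_apply hα (w.1 x)

theorem rRefl_rRefl (α x : E) : rRefl α (rRefl α x) = x := by
  rw [← reflection_eq_rRefl, ← reflection_eq_rRefl, Submodule.reflection_reflection]

theorem inner_rRefl_self {α : E} (hα : α ≠ 0) (x : E) : ⟪α, rRefl α x⟫ = -⟪α, x⟫ := by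
  have h : ⟪α, α⟫ ≠ 0 := inner_self_ne_zero.2 hα
  rw [rRefl, coroot, inner_sub_right, real_inner_smul_right, real_inner_smul_left]
  field_simp
  ring

theorem weylGroup_inv_mem {D : HOData E} (w : weylGroup D) :
    ∀ α ∈ D.R, w.1⁻¹ α ∈ D.R := by
  have key : ∀ w ∈ weylGroup D, ∀ α ∈ D.R, w α ∈ D.R ∧ w⁻¹ α ∈ D.R := by
    intro w hw
    rw [weylGroup] at hw
    induction hw using Subgroup.closure_induction with
    | mem v hv =>
      obtain ⟨β, hβ, hv⟩ := hv
      have hvv : v⁻¹ = v := by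
        rw [inv_eq_iff_mul_eq_one]
        refine LinearIsometryEquiv.ext fun x => ?_
        change v (v x) = x
        rw [hv, hv, rRefl_rRefl]
      intro α hα
      rw [hvv, hv]
      exact ⟨D.refl_mem β hβ α hα, D.refl_mem β hβ α hα⟩
    | one => simp
    | mul a b _ _ ha hb =>
      intro α hα
      rw [mul_inv_rev]
      exact ⟨(ha _ (hb α hα).1).1, (hb _ (ha α hα).2).2⟩
    | inv a _ ha =>
      intro α hα
      rw [inv_inv]
      exact ⟨(ha α hα).2, (ha α hα).1⟩
  exact fun α hα => (key w.1 w.2 α hα).2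

theorem inner_weyl_apply {D : HOData E} (w : weylGroup D) (x y : E) :
    ⟪x, w.1 y⟫ = ⟪w.1⁻¹ x, y⟫ := by
  have h : x = w.1 (w.1⁻¹ x) := (w.1.apply_symm_apply x).symm
  conv_lhs => rw [h]
  exact w.1.inner_map_map _ _

theorem norm_weyl_apply {D : HOData E} (w : weylGroup D) (x : E) : ‖w.1 x‖ = ‖x‖ :=
  w.1.norm_map x

theorem eventually_regular (D : HOData E) (x : E) :
    ∃ u : E, ∀ᶠ s in 𝓝[≠] (0 : ℝ), HORegular D (x + s • u) := by
  obtain ⟨u, hu⟩ := D.pos_char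
  refine ⟨u, ?_⟩
  have hne : ∀ α ∈ D.R, ⟪α, u⟫ ≠ 0 := by
    intro α hα
    rcases D.pos_or_neg α hα with h | h
    · exact ((hu α hα).1 h).ne'
    · have h1 := (hu _ (D.neg_mem α hα)).1 h
      rw [inner_neg_left] at h1
      linarith
  have h : ∀ α ∈ D.R, ∀ᶠ s in 𝓝[≠] (0 : ℝ), ⟪α, x + s • u⟫ ≠ 0 := by
    intro α hα
    have hfin : ∀ᶠ s in 𝓝[≠] (0 : ℝ), s ≠ -⟪α, x⟫ / ⟪α, u⟫ := by
      rcases eq_or_ne (0 : ℝ) (-⟪α, x⟫ / ⟪α, u⟫) with h0 | h0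
      · rw [← h0]
        exact self_mem_nhdsWithin
      · exact nhdsWithin_le_nhds (isOpen_ne.mem_nhds h0)
    filter_upwards [hfin] with s hs h0
    apply hs
    rw [inner_add_right, real_inner_smul_right] at h0
    rw [eq_div_iff (hne α hα)]
    linarith
  exact (Finset.eventually_all D.R).2 h

/-- An identity between two functions continuous at `x` may be checked at regular points. -/
theorem eq_of_eq_regular {X : Type*} [TopologicalSpace X] [T2Space X] (D : HOData E) {x : E}
    {f g : E → X} (hf : ContinuousAt f x) (hg : ContinuousAt g x)
    (h : ∀ y, HORegular D y → f y = g y) : f x = g x := by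
  obtain ⟨u, hu⟩ := eventually_regular D x
  have hlim : Filter.Tendsto (fun s : ℝ => x + s • u) (𝓝[≠] 0) (𝓝 x) := by
    have : Continuous fun s : ℝ => x + s • u := by fun_prop
    simpa using (this.tendsto 0).mono_left nhdsWithin_le_nhds
  refine tendsto_nhds_unique (hf.tendsto.comp hlim) ((hg.tendsto.comp hlim).congr' ?_)
  filter_upwards [hu] with s hs
  exact (h _ hs).symm

/-- The coefficients of the Cherednik system contracted with the Euler field centered at `p`. -/
def coefHO (D : HOData E) (p α x : E) : ℝ :=
  D.k α * if ⟪α, p⟫ = 0 then phiHO ⟪α, x⟫ else ⟪α, x - p⟫ * psiHO ⟪α, x⟫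

theorem continuous_rRefl (α : E) : Continuous (rRefl α) := by
  unfold rRefl
  fun_prop

theorem contDiffOn_coefHO (D : HOData E) (p α : E) :
    ContDiffOn ℝ ∞ (coefHO D p α) {x | ⟪α, p⟫ = 0 ∨ ⟪α, x⟫ ≠ 0} := by
  intro x hx
  unfold coefHO
  by_cases h : ⟪α, p⟫ = 0
  · simp only [h, if_true]
    refine ContDiff.contDiffWithinAt (contDiff_const.mul (contDiff_phiHO.comp ?_))
    exact contDiff_const.inner ℝ contDiff_id
  · simp only [h, if_false]
    have hx' : ⟪α, x⟫ ≠ 0 := hx.resolve_left h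
    refine ContDiffAt.contDiffWithinAt (contDiffAt_const.mul (ContDiffAt.mul ?_ ?_))
    · exact (contDiff_const.inner ℝ (contDiff_id.sub contDiff_const)).contDiffAt
    · exact ContDiffAt.comp (g := psiHO) (f := fun x => ⟪α, x⟫) x
        (contDiffOn_psiHO.contDiffAt (isOpen_ne.mem_nhds hx'))
        (contDiff_const.inner ℝ contDiff_id).contDiffAt

theorem isOpen_coefHO_domain (p α : E) : IsOpen {x : E | ⟪α, p⟫ = 0 ∨ ⟪α, x⟫ ≠ 0} := by
  by_cases h : ⟪α, p⟫ = 0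
  · simp [h]
  · simp only [h, false_or]
    exact isOpen_ne_fun (by fun_prop) continuous_const

/-- The Cherednik system along the Euler field centered at `p`, extended to singular points. -/
theorem fderiv_euler_of_cherednik {F : Type*} [NormedAddCommGroup F] [NormedSpace ℝ F]
    (D : HOData E) {G : E → F} {T : E → E → F} (hG : ContDiff ℝ ∞ G)
    (hT : Continuous (Function.uncurry T))
    (heq : ∀ ξ x, HORegular D x → fderiv ℝ G x ξ =
      ∑ α ∈ D.Rpos, (D.k α * ⟪α, ξ⟫ / (1 - Real.exp (-⟪α, x⟫))) • (G (rRefl α x) - G x) + T ξ x)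
    {p x : E} (h : ∀ α ∈ D.Rpos, ⟪α, p⟫ = 0 ∨ ⟪α, x⟫ ≠ 0) :
    fderiv ℝ G x (x - p) =
      ∑ α ∈ D.Rpos, coefHO D p α x • (G (rRefl α x) - G x) + T (x - p) x := by
  have hGc : Continuous G := hG.continuous
  have hG' : Continuous (fderiv ℝ G) := hG.continuous_fderiv (by simp)
  refine eq_of_eq_regular D (f := fun x => fderiv ℝ G x (x - p))
    (g := fun x => ∑ α ∈ D.Rpos, coefHO D p α x • (G (rRefl α x) - G x) + T (x - p) x)
    ?_ ?_ fun y hy => ?_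
  · exact (hG'.clm_apply (by fun_prop)).continuousAt
  · refine ContinuousAt.add (tendsto_finsetSum _ fun α hα => ?_) ?_
    · refine ContinuousAt.smul ?_ ?_
      · exact ((contDiffOn_coefHO D p α).contDiffAt
          ((isOpen_coefHO_domain p α).mem_nhds (h α hα))).continuousAt
      · exact ((hGc.comp (continuous_rRefl α)).sub hGc).continuousAt
    · have : Continuous fun x => T (x - p) x :=
        hT.comp (f := fun x : E => (x - p, x)) (by fun_prop)
      exact this.continuousAt
  · rw [heq _ y hy]
    congr 1
    refine Finset.sum_congr rfl fun α hα => ?_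
    have hne : ⟪α, y⟫ ≠ 0 := hy α (D.pos_subset hα)
    congr 1
    unfold coefHO
    split_ifs with h0
    · rw [phiHO_of_ne_zero hne, inner_sub_right, h0, sub_zero]
      ring
    · rw [psiHO]
      ring

end WeylGroup

section Geometry

theorem exists_scale (D : HOData E) {κ : ℝ} (hκ : 0 < κ) (hκ1 : κ ≤ 1) (x : E) (n : ℕ) :
    ∀ r : ℝ, 0 < r → (D.R.filter fun α => |⟪α, x⟫| ≤ r).card ≤ n →
      ∃ τ, κ ^ n * r ≤ τ ∧ τ ≤ r ∧ ∀ α ∈ D.R, |⟪α, x⟫| ≤ κ * τ ∨ τ < |⟪α, x⟫| := by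
  induction n with
  | zero =>
    intro r hr hcard
    refine ⟨r, by simp, le_rfl, fun α hα => Or.inr ?_⟩
    rw [Nat.le_zero, Finset.card_eq_zero, Finset.filter_eq_empty_iff] at hcard
    exact not_le.1 (hcard hα)
  | succ n ih =>
    intro r hr hcard
    by_cases h : ∀ α ∈ D.R, |⟪α, x⟫| ≤ κ * r ∨ r < |⟪α, x⟫|
    · refine ⟨r, ?_, le_rfl, h⟩
      exact mul_le_of_le_one_left hr.le (pow_le_one₀ hκ.le hκ1)
    · push Not at h
      obtain ⟨β, hβ, h1, h2⟩ := h
      have hle : κ * r ≤ r := mul_le_of_le_one_left hr.le hκ1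
      have hlt : (D.R.filter fun α => |⟪α, x⟫| ≤ κ * r).card <
          (D.R.filter fun α => |⟪α, x⟫| ≤ r).card := by
        refine Finset.card_lt_card (Finset.ssubset_iff_subset_ne.2 ⟨?_, fun he => ?_⟩)
        · exact Finset.monotone_filter_right _ fun α _ hα => hα.trans hle
        · have hmem : β ∈ D.R.filter fun α => |⟪α, x⟫| ≤ r := Finset.mem_filter.2 ⟨hβ, h2⟩
          rw [← he] at hmem
          exact absurd (Finset.mem_filter.1 hmem).2 (not_le.2 h1)
      obtain ⟨τ, hτ1, hτ2, hτ⟩ := ih (κ * r) (by positivity) (by omega)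
      exact ⟨τ, by rw [pow_succ, mul_assoc]; exact hτ1, hτ2.trans hle, hτ⟩

/-- A point on which finitely many functionals are small is close to their common kernel. -/
theorem exists_near_common_kernel (S : Finset E) :
    ∃ C : ℝ, 0 ≤ C ∧ ∀ (x : E) (δ : ℝ), 0 ≤ δ → (∀ α ∈ S, |⟪α, x⟫| ≤ δ) →
      ∃ p, (∀ α ∈ S, ⟪α, p⟫ = 0) ∧ ‖x - p‖ ≤ C * δ := by
  let T : E →ₗ[ℝ] (S → ℝ) := LinearMap.pi fun α => (innerSL ℝ (α : E)).toLinearMap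
  obtain ⟨g, hg⟩ := T.rangeRestrict.exists_rightInverse_of_surjective T.range_rangeRestrict
  let gc := LinearMap.toContinuousLinearMap g
  refine ⟨‖gc‖, gc.opNorm_nonneg, fun x δ hδ hx => ?_⟩
  refine ⟨x - g (T.rangeRestrict x), fun α hα => ?_, ?_⟩
  · have h1 : T.rangeRestrict (g (T.rangeRestrict x)) = T.rangeRestrict x :=
      LinearMap.congr_fun hg _
    have h2 : T (g (T.rangeRestrict x)) = T x := congrArg Subtype.val h1
    have h3 := congrFun h2 ⟨α, hα⟩
    have h4 : ⟪α, g (T.rangeRestrict x)⟫ = ⟪α, x⟫ := h3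
    rw [inner_sub_right, h4, sub_self]
  · rw [sub_sub_cancel]
    refine (gc.le_opNorm (T.rangeRestrict x)).trans ?_
    gcongr
    have : ‖T x‖ ≤ δ := (pi_norm_le_iff_of_nonneg hδ).2 fun α => hx α α.2
    exact this

/-- Every point `x` is close, at some scale `τ` comparable to `r`, to a point `p` such that the
roots not vanishing at `p` are larger than `τ` at `x`. -/
theorem exists_center (D : HOData E) {η : ℝ} (hη : 0 < η) :
    ∃ c : ℝ, 0 < c ∧ ∀ r : ℝ, 0 < r → ∀ x : E, ∃ p τ, c * r ≤ τ ∧ τ ≤ r ∧ ‖x - p‖ ≤ η * τ ∧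
      ∀ α ∈ D.R, ⟪α, p⟫ = 0 ∨ τ < |⟪α, x⟫| := by
  choose C hC0 hC using exists_near_common_kernel (E := E)
  let C₀ := ∑ S ∈ D.R.powerset, C S
  have hC₀ : 0 ≤ C₀ := Finset.sum_nonneg fun S _ => hC0 S
  let κ := min 1 (η / (C₀ + 1))
  have hκ : 0 < κ := lt_min one_pos (by positivity)
  refine ⟨κ ^ D.R.card, by positivity, fun r hr x => ?_⟩
  obtain ⟨τ, hτ1, hτ2, hτ⟩ := exists_scale D hκ (min_le_left _ _) x D.R.card r hr
    (Finset.card_filter_le _ _)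
  have hτ0 : 0 < τ := lt_of_lt_of_le (by positivity) hτ1
  let S := D.R.filter fun α => |⟪α, x⟫| ≤ κ * τ
  obtain ⟨p, hp, hxp⟩ := hC S x (κ * τ) (by positivity) fun α hα => (Finset.mem_filter.1 hα).2
  refine ⟨p, τ, hτ1, hτ2, hxp.trans ?_, fun α hα => ?_⟩
  · have h1 : C S ≤ C₀ := Finset.single_le_sum (f := C) (fun S _ => hC0 S)
      (Finset.mem_powerset.2 (Finset.filter_subset _ _))
    calc C S * (κ * τ) ≤ (C₀ + 1) * (η / (C₀ + 1) * τ) := by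
          gcongr
          · linarith
          · exact min_le_right _ _
      _ = η * τ := by field_simp
  · rcases hτ α hα with h | h
    · exact Or.inl (hp α (Finset.mem_filter.2 ⟨hα, h⟩))
    · exact Or.inr h

end Geometry

section MaxW

variable (D : HOData E) [Fintype (weylGroup D)]

theorem inner_weyl_le_maxW (w : weylGroup D) (l x : E) : ⟪w.1 l, x⟫ ≤ maxW D l x :=
  le_ciSup (f := fun w : weylGroup D => ⟪w.1 l, x⟫) (Set.finite_range _).bddAbove w

theorem inner_le_maxW_right (w : weylGroup D) (l x : E) : ⟪l, w.1 x⟫ ≤ maxW D l x := by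
  rw [inner_weyl_apply]
  exact inner_weyl_le_maxW D w⁻¹ l x

theorem maxW_weyl_apply_le (v : weylGroup D) (l x : E) : maxW D l (v.1 x) ≤ maxW D l x := by
  refine ciSup_le fun w => ?_
  rw [inner_weyl_apply]
  exact inner_weyl_le_maxW D (v⁻¹ * w) l x

theorem maxW_le_add_norm_right (l x y : E) : maxW D l y ≤ maxW D l x + ‖l‖ * ‖y - x‖ := by
  refine ciSup_le fun w => ?_
  have h1 := inner_weyl_le_maxW D w l x
  have h2 := real_inner_le_norm (w.1 l) (y - x)
  rw [norm_weyl_apply, inner_sub_right] at h2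
  linarith

theorem maxW_le_add_norm_left (l m x : E) : maxW D m x ≤ maxW D l x + ‖m - l‖ * ‖x‖ := by
  refine ciSup_le fun w => ?_
  have h1 := inner_weyl_le_maxW D w l x
  have h2 := real_inner_le_norm (w.1 (m - l)) x
  rw [norm_weyl_apply, map_sub, inner_sub_left] at h2
  linarith

end MaxW

section Positivity

open scoped ContDiff Topology

variable {D : HOData E}

theorem coefHO_zero (α x : E) : coefHO D 0 α x = D.k α * phiHO ⟪α, x⟫ := by
  simp [coefHO]

theorem rRefl_smul (α : E) (t : ℝ) (x : E) : rRefl α (t • x) = t • rRefl α x := by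
  simp only [rRefl, real_inner_smul_right, smul_sub, smul_smul]

theorem weylRefl_mul_apply_smul {α : E} (hα : α ∈ D.Rpos) (w : weylGroup D) (t : ℝ) (x : E) :
    rRefl α (t • w.1 x) = t • (weylRefl D α * w).1 x := by
  rw [weylRefl_mul_apply (D.pos_subset hα), rRefl_smul]

theorem k_mul_phiHO_nonneg {α : E} (hα : α ∈ D.Rpos) (s : ℝ) : 0 ≤ D.k α * phiHO s :=
  mul_nonneg (D.k_pos α (D.pos_subset hα)).le (phiHO_nonneg s)

theorem IsOpdamR.contDiff {l : E} {G : E → ℝ} (hG : IsOpdamR D l G) : ContDiff ℝ ∞ G :=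
  contDiff_iff_contDiffAt.2 fun x => (hG.1 x (Set.mem_univ x)).contDiffAt

theorem IsOpdamC.contDiff {l₁ l₂ : E} {G : E → ℂ} (hG : IsOpdamC D l₁ l₂ G) : ContDiff ℝ ∞ G :=
  contDiff_iff_contDiffAt.2 fun x => (hG.1 x (Set.mem_univ x)).contDiffAt

theorem hasDerivAt_comp_smul {F : Type*} [NormedAddCommGroup F] [NormedSpace ℝ F] {G : E → F}
    (hG : ContDiff ℝ ∞ G) (y : E) (t : ℝ) :
    HasDerivAt (fun s : ℝ => G (s • y)) (fderiv ℝ G (t • y) y) t := by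
  have h := ((hG.differentiable (by simp)) (t • y)).hasFDerivAt.comp_hasDerivAt t
    ((hasDerivAt_id t).smul_const y)
  simpa [Function.comp_def] using h

/-- The Euler equation centered at a point, for a complex spectral parameter. -/
theorem IsOpdamC.fderiv_euler {l₁ l₂ : E} {G : E → ℂ} (hG : IsOpdamC D l₁ l₂ G) {p x : E}
    (h : ∀ α ∈ D.Rpos, ⟪α, p⟫ = 0 ∨ ⟪α, x⟫ ≠ 0) :
    fderiv ℝ G x (x - p) = ∑ α ∈ D.Rpos, coefHO D p α x • (G (rRefl α x) - G x) +
      (((⟪rhoHO D + l₁, x - p⟫ : ℝ) : ℂ) + Complex.I * ((⟪l₂, x - p⟫ : ℝ) : ℂ)) * G x := by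
  refine fderiv_euler_of_cherednik D
    (T := fun ξ x => (((⟪rhoHO D + l₁, ξ⟫ : ℝ) : ℂ) + Complex.I * ((⟪l₂, ξ⟫ : ℝ) : ℂ)) * G x)
    hG.contDiff ?_ ?_ h
  · have := hG.contDiff.continuous
    unfold Function.uncurry
    fun_prop
  · intro ξ x hx
    rw [hG.2.2 ξ x hx]
    simp only [Complex.real_smul]

theorem IsOpdamC.ray {l₁ l₂ : E} {G : E → ℂ} (hG : IsOpdamC D l₁ l₂ G) (w : weylGroup D) (x : E)
    (t : ℝ) :
    (t : ℂ) * fderiv ℝ G (t • w.1 x) (w.1 x) =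
      ∑ α ∈ D.Rpos, ((D.k α * phiHO ⟪α, t • w.1 x⟫ : ℝ) : ℂ) *
        (G (t • (weylRefl D α * w).1 x) - G (t • w.1 x)) +
      t * (((⟪rhoHO D + l₁, w.1 x⟫ : ℝ) : ℂ) + Complex.I * ((⟪l₂, w.1 x⟫ : ℝ) : ℂ)) *
        G (t • w.1 x) := by
  have h := hG.fderiv_euler (p := 0) (x := t • w.1 x) fun α _ => Or.inl (inner_zero_right α)
  rw [sub_zero, map_smul, Complex.real_smul] at h
  rw [h]
  congr 1
  · refine Finset.sum_congr rfl fun α hα => ?_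
    rw [coefHO_zero, weylRefl_mul_apply_smul hα, Complex.real_smul]
  · rw [real_inner_smul_right, real_inner_smul_right]
    push_cast
    ring

theorem IsOpdamR.ray {G : E → ℝ} (hG : IsOpdamR D 0 G) (w : weylGroup D) (x : E) (t : ℝ) :
    t * fderiv ℝ G (t • w.1 x) (w.1 x) =
      ∑ α ∈ D.Rpos, D.k α * phiHO ⟪α, t • w.1 x⟫ *
        (G (t • (weylRefl D α * w).1 x) - G (t • w.1 x)) +
      t * ⟪rhoHO D, w.1 x⟫ * G (t • w.1 x) := by
  have hc : Continuous (Function.uncurry fun ξ x => ⟪rhoHO D + 0, ξ⟫ * G x) := by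
    have := hG.contDiff.continuous
    unfold Function.uncurry
    fun_prop
  have h := fderiv_euler_of_cherednik D (T := fun ξ x => ⟪rhoHO D + 0, ξ⟫ * G x) hG.contDiff hc
    (by simpa only [smul_eq_mul] using hG.2.2) (p := 0) (x := t • w.1 x)
    fun α _ => Or.inl (inner_zero_right α)
  rw [sub_zero, map_smul, smul_eq_mul] at h
  rw [h]
  congr 1
  · refine Finset.sum_congr rfl fun α hα => ?_
    rw [coefHO_zero, weylRefl_mul_apply_smul hα, smul_eq_mul]
  · rw [real_inner_smul_right, add_zero]

variable [Fintype (weylGroup D)]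

theorem abs_inner_rho_weyl_le (w : weylGroup D) (x : E) :
    |⟪rhoHO D, w.1 x⟫| ≤ ‖rhoHO D‖ * ‖x‖ := by
  simpa [norm_weyl_apply] using abs_real_inner_le_norm (rhoHO D) (w.1 x)

theorem IsOpdamR.nonneg {G : E → ℝ} (hG : IsOpdamR D 0 G) (x : E) : 0 ≤ G x := by
  set c := -(‖rhoHO D‖ * ‖x‖ + 1) with hc
  have hder : ∀ (w : weylGroup D) (t : ℝ),
      HasDerivAt (fun s => -(Real.exp (c * s) * G (s • w.1 x)))
        (-(Real.exp (c * t) * c * G (t • w.1 x) +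
          Real.exp (c * t) * fderiv ℝ G (t • w.1 x) (w.1 x))) t := by
    intro w t
    have h1 : HasDerivAt (fun s : ℝ => Real.exp (c * s)) (Real.exp (c * t) * c) t := by
      simpa using ((hasDerivAt_id t).const_mul c).exp
    exact (h1.mul (hasDerivAt_comp_smul hG.contDiff _ t)).neg
  obtain ⟨w, t, ht, hmax, h0⟩ := exists_max_unitInterval hder
  have hray := hG.ray w x t
  have hsum : 0 ≤ ∑ α ∈ D.Rpos, D.k α * phiHO ⟪α, t • w.1 x⟫ *
        (G (t • (weylRefl D α * w).1 x) - G (t • w.1 x)) := by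
    refine Finset.sum_nonneg fun α hα => mul_nonneg (k_mul_phiHO_nonneg hα _) ?_
    have h1 := hmax (weylRefl D α * w) t ht
    have h2 : Real.exp (c * t) * G (t • w.1 x) ≤
      Real.exp (c * t) * G (t • (weylRefl D α * w).1 x) := by linarith
    exact sub_nonneg.2 (le_of_mul_le_mul_left h2 (Real.exp_pos _))
  have hρ := (abs_le.1 (abs_inner_rho_weyl_le w x)).2
  have hmin : 0 ≤ G (t • w.1 x) := by
    rcases ht.1.eq_or_lt with h | h
    · rw [← h, zero_smul, hG.2.1]
      exact zero_le_one
    · by_contra! hneg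
      have h3 : 0 ≤ -(Real.exp (c * t)) * (t * c * G (t • w.1 x) +
          t * fderiv ℝ G (t • w.1 x) (w.1 x)) := by linarith
      have h4 : 0 < t * c * G (t • w.1 x) + t * fderiv ℝ G (t • w.1 x) (w.1 x) := by
        rw [hray]
        have : 0 < t * (-(⟪rhoHO D, w.1 x⟫ + c)) * -G (t • w.1 x) :=
          mul_pos (mul_pos h (by linarith)) (by linarith)
        linarith
      have := mul_pos (Real.exp_pos (c * t)) h4
      linarith
  have h1 := hmax 1 1 ⟨zero_le_one, le_rfl⟩
  have h2 : 0 ≤ Real.exp (c * t) * G (t • w.1 x) := by positivity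
  have h3 : 0 ≤ Real.exp (c * 1) * G ((1 : ℝ) • (1 : weylGroup D).1 x) := by linarith
  have h4 : (1 : ℝ) • (1 : weylGroup D).1 x = x := one_smul ℝ x
  rw [h4] at h3
  exact nonneg_of_mul_nonneg_right h3 (Real.exp_pos _)

theorem IsOpdamR.pos {G : E → ℝ} (hG : IsOpdamR D 0 G) (x : E) : 0 < G x := by
  set c := ‖rhoHO D‖ * ‖x‖ with hc
  have hder : ∀ (w : weylGroup D) (t : ℝ),
      HasDerivAt (fun s => -(Real.exp (c * s) * G (s • w.1 x) + 2⁻¹ * s))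
        (-(Real.exp (c * t) * c * G (t • w.1 x) +
          Real.exp (c * t) * fderiv ℝ G (t • w.1 x) (w.1 x) + 2⁻¹)) t := by
    intro w t
    have h1 : HasDerivAt (fun s : ℝ => Real.exp (c * s)) (Real.exp (c * t) * c) t := by
      simpa using ((hasDerivAt_id t).const_mul c).exp
    have h2 : HasDerivAt (fun s : ℝ => (2⁻¹ : ℝ) * s) 2⁻¹ t := by
      simpa using (hasDerivAt_id t).const_mul (2⁻¹ : ℝ)
    exact ((h1.mul (hasDerivAt_comp_smul hG.contDiff _ t)).add h2).neg
  obtain ⟨w, t, ht, hmax, h0⟩ := exists_max_unitInterval hder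
  have hray := hG.ray w x t
  have hsum : 0 ≤ ∑ α ∈ D.Rpos, D.k α * phiHO ⟪α, t • w.1 x⟫ *
        (G (t • (weylRefl D α * w).1 x) - G (t • w.1 x)) := by
    refine Finset.sum_nonneg fun α hα => mul_nonneg (k_mul_phiHO_nonneg hα _) ?_
    have h1 := hmax (weylRefl D α * w) t ht
    have h2 : Real.exp (c * t) * G (t • w.1 x) ≤
      Real.exp (c * t) * G (t • (weylRefl D α * w).1 x) := by linarith
    exact sub_nonneg.2 (le_of_mul_le_mul_left h2 (Real.exp_pos _))
  have hρ := (abs_le.1 (abs_inner_rho_weyl_le w x)).1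
  have ht0 : t = 0 := by
    have h3 : 0 ≤ t * c * G (t • w.1 x) + t * fderiv ℝ G (t • w.1 x) (w.1 x) := by
      rw [hray]
      have : 0 ≤ t * (⟪rhoHO D, w.1 x⟫ + c) * G (t • w.1 x) :=
        mul_nonneg (mul_nonneg ht.1 (by linarith)) (hG.nonneg _)
      linarith
    have := mul_nonneg (Real.exp_pos (c * t)).le h3
    have : t * 2⁻¹ ≤ 0 := by linarith
    linarith [ht.1]
  have h1 := hmax 1 1 ⟨zero_le_one, le_rfl⟩
  have h4 : (1 : ℝ) • (1 : weylGroup D).1 x = x := one_smul ℝ x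
  rw [h4, ht0, zero_smul, hG.2.1] at h1
  simp only [mul_zero, Real.exp_zero] at h1
  have h5 : 0 < Real.exp (c * 1) * G x := by linarith
  exact pos_of_mul_pos_right h5 (Real.exp_pos _).le

theorem quotient_ray_identity {ι : Type*} (s : Finset ι) (κ g g₀ : ι → ℂ)
    {γ γ₀ dγ dγ₀ b b₀ e m t : ℂ} (hg₀ : ∀ i ∈ s, g₀ i ≠ 0) (hγ₀ : γ₀ ≠ 0)
    (h : t * dγ = ∑ i ∈ s, κ i * (g i - γ) + t * b * γ)
    (h₀ : t * dγ₀ = ∑ i ∈ s, κ i * (g₀ i - γ₀) + t * b₀ * γ₀) :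
    t * ((e * -m * γ₀ - e * dγ₀) / γ₀ ^ 2 * γ + e / γ₀ * dγ) =
      ∑ i ∈ s, κ i * (g₀ i / γ₀) * (e / g₀ i * g i - e / γ₀ * γ) +
        t * (b - b₀ - m) * (e / γ₀ * γ) := by
  have h1 : ∑ i ∈ s, κ i * (g₀ i / γ₀) * (e / g₀ i * g i - e / γ₀ * γ) =
      (∑ i ∈ s, κ i * (g i - γ)) * (e / γ₀) -
        (∑ i ∈ s, κ i * (g₀ i - γ₀)) * (e * γ / γ₀ ^ 2) := by
    rw [Finset.sum_mul, Finset.sum_mul, ← Finset.sum_sub_distrib]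
    refine Finset.sum_congr rfl fun i hi => ?_
    have := hg₀ i hi
    field_simp
    ring
  rw [h1, eq_sub_of_add_eq h.symm, eq_sub_of_add_eq h₀.symm]
  field_simp
  ring

/-- The bound of an Opdam function by the one with trivial spectral parameter. -/
theorem IsOpdamC.norm_le {l₁ l₂ : E} {G : E → ℂ} (hG : IsOpdamC D l₁ l₂ G) {G₀ : E → ℝ}
    (hG₀ : IsOpdamR D 0 G₀) (x : E) : ‖G x‖ ≤ G₀ x * Real.exp (maxW D l₁ x) := by
  set m := maxW D l₁ x with hm
  let q : weylGroup D → ℝ → ℂ := fun w t =>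
    ((Real.exp (-m * t) / G₀ (t • w.1 x) : ℝ) : ℂ) * G (t • w.1 x)
  have hpos := fun y => (hG₀.pos y).ne'
  let q' : weylGroup D → ℝ → ℂ := fun w t =>
    (((Real.exp (-m * t) * -m * G₀ (t • w.1 x) -
      Real.exp (-m * t) * fderiv ℝ G₀ (t • w.1 x) (w.1 x)) / G₀ (t • w.1 x) ^ 2 : ℝ) : ℂ) *
        G (t • w.1 x) +
      ((Real.exp (-m * t) / G₀ (t • w.1 x) : ℝ) : ℂ) * fderiv ℝ G (t • w.1 x) (w.1 x)
  have hq : ∀ w t, HasDerivAt (q w) (q' w t) t := by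
    intro w t
    have h1 : HasDerivAt (fun s : ℝ => Real.exp (-m * s)) (Real.exp (-m * t) * -m) t := by
      simpa using ((hasDerivAt_id t).const_mul (-m)).exp
    have h2 := (h1.div (hasDerivAt_comp_smul hG₀.contDiff (w.1 x) t) (hpos _)).ofReal_comp
    exact h2.mul (hasDerivAt_comp_smul hG.contDiff (w.1 x) t)
  have hq' : ∀ (w : weylGroup D) (t : ℝ), (t : ℂ) * q' w t =
      ∑ α ∈ D.Rpos, ((D.k α * phiHO ⟪α, t • w.1 x⟫ *
        (G₀ (t • (weylRefl D α * w).1 x) / G₀ (t • w.1 x)) : ℝ) : ℂ) *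
          (q (weylRefl D α * w) t - q w t) +
      t * (((⟪l₁, w.1 x⟫ - m : ℝ) : ℂ) + Complex.I * ((⟪l₂, w.1 x⟫ : ℝ) : ℂ)) * q w t := by
    intro w t
    have hne : ∀ y, ((G₀ y : ℝ) : ℂ) ≠ 0 := fun y => Complex.ofReal_ne_zero.2 (hpos y)
    have hr0 := congrArg (fun r : ℝ => (r : ℂ)) (hG₀.ray w x t)
    push_cast at hr0
    have h := quotient_ray_identity D.Rpos (fun α => ((D.k α * phiHO ⟪α, t • w.1 x⟫ : ℝ) : ℂ))
      (fun α => G (t • (weylRefl D α * w).1 x)) (fun α => (G₀ (t • (weylRefl D α * w).1 x) : ℂ))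
      (e := ((Real.exp (-m * t) : ℝ) : ℂ)) (m := m) (fun α _ => hne _) (hne (t • w.1 x))
      (hG.ray w x t) (by push_cast; exact hr0)
    simp only [q, q']
    push_cast [inner_add_left] at h ⊢
    rw [h]
    ring
  have hder : ∀ (w : weylGroup D) (t : ℝ) (ε : ℝ),
      HasDerivAt (fun s => ‖q w s‖ ^ 2 - ε * s) (2 * ⟪q w t, q' w t⟫ - ε) t := by
    intro w t ε
    have h2 : HasDerivAt (fun s : ℝ => ε * s) ε t := by
      simpa using (hasDerivAt_id t).const_mul ε
    exact (hq w t).norm_sq.sub h2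
  have hle : ‖q 1 1‖ ^ 2 ≤ 1 := by
    refine le_of_forall_pos_le_add fun ε hε => ?_
    obtain ⟨w, t, ht, hmax, h0⟩ := exists_max_unitInterval fun w t => hder w t ε
    have ht0 : t = 0 := by
      have h1 : t * ⟪q w t, q' w t⟫ ≤ 0 := by
        rw [← real_inner_smul_right, Complex.real_smul, hq', inner_add_right]
        refine add_nonpos ?_ ?_
        · rw [inner_sum]
          refine Finset.sum_nonpos fun α hα => ?_
          rw [← Complex.real_smul, real_inner_smul_right, inner_sub_right,
            real_inner_self_eq_norm_sq]
          refine mul_nonpos_of_nonneg_of_nonpos (mul_nonneg (k_mul_phiHO_nonneg hα _)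
            (div_nonneg (hG₀.nonneg _) (hG₀.nonneg _))) ?_
          have h2 := real_inner_le_norm (q w t) (q (weylRefl D α * w) t)
          have h3 := hmax (weylRefl D α * w) t ht
          have h4 : ‖q (weylRefl D α * w) t‖ ≤ ‖q w t‖ :=
            le_of_sq_le_sq (by linarith) (norm_nonneg _)
          nlinarith [norm_nonneg (q w t)]
        · have h2 : ⟪q w t, (t : ℂ) * (((⟪l₁, w.1 x⟫ - m : ℝ) : ℂ) +
              Complex.I * ((⟪l₂, w.1 x⟫ : ℝ) : ℂ)) * q w t⟫ =
              t * (⟪l₁, w.1 x⟫ - m) * ‖q w t‖ ^ 2 := by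
            rw [← Complex.normSq_eq_norm_sq]
            simp only [Complex.inner, Complex.mul_re, Complex.mul_im, Complex.conj_re,
              Complex.conj_im, Complex.add_re, Complex.add_im, Complex.ofReal_re,
              Complex.ofReal_im, Complex.I_re, Complex.I_im, Complex.normSq_apply]
            ring
          rw [h2]
          have h3 := inner_le_maxW_right D w l₁ x
          exact mul_nonpos_of_nonpos_of_nonneg
            (mul_nonpos_of_nonneg_of_nonpos ht.1 (by linarith)) (sq_nonneg _)
      have h2 : ε * t ≤ 0 := by nlinarith
      exact le_antisymm (nonpos_of_mul_nonpos_right h2 hε) ht.1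
    have h1 := hmax 1 1 ⟨zero_le_one, le_rfl⟩
    have h2 : q w 0 = 1 := by
      simp [q, hG.2.1, hG₀.2.1]
    rw [ht0, h2] at h1
    simp only [norm_one] at h1
    linarith
  have h1 : ‖q 1 1‖ = Real.exp (-m) / G₀ x * ‖G x‖ := by
    have h4 : (1 : ℝ) • (1 : weylGroup D).1 x = x := one_smul ℝ x
    simp only [q, h4, norm_mul, Complex.norm_real, Real.norm_eq_abs, mul_one]
    rw [abs_of_nonneg (div_nonneg (Real.exp_pos _).le (hG₀.nonneg _))]
  have h2 : Real.exp (-m) / G₀ x * ‖G x‖ ≤ 1 := by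
    rw [← h1]
    exact (sq_le_one_iff₀ (norm_nonneg _)).1 hle
  have h3 := hG₀.pos x
  rw [Real.exp_neg, div_mul_eq_mul_div, div_le_one h3, inv_mul_le_iff₀ (Real.exp_pos _)] at h2
  linarith

end Positivity

section Harnack

open scoped ContDiff Topology

variable {D : HOData E} [Fintype (weylGroup D)]

theorem card_weylGroup_pos : 0 < (Fintype.card (weylGroup D) : ℝ) :=
  Nat.cast_pos.2 Fintype.card_pos

theorem Fsym_weyl_apply (G : E → ℝ) (v : weylGroup D) (x : E) :
    Fsym D G (v.1 x) = Fsym D G x := by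
  unfold Fsym
  congr 1
  exact Fintype.sum_equiv (Equiv.mulRight v) _ _ fun w => rfl

theorem IsOpdamR.Fsym_pos {G : E → ℝ} (hG : IsOpdamR D 0 G) (x : E) : 0 < Fsym D G x :=
  mul_pos (inv_pos.2 card_weylGroup_pos)
    (Finset.sum_pos (fun _ _ => hG.pos _) Finset.univ_nonempty)

theorem IsOpdamR.le_card_mul_Fsym {G : E → ℝ} (hG : IsOpdamR D 0 G) (x : E) :
    G x ≤ Fintype.card (weylGroup D) * Fsym D G x := by
  rw [Fsym, mul_inv_cancel_left₀ card_weylGroup_pos.ne']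
  exact Finset.single_le_sum (f := fun w : weylGroup D => G (w.1 x)) (fun w _ => hG.nonneg _)
    (Finset.mem_univ 1)

theorem hasFDerivAt_Fsym {G : E → ℝ} (hG : ContDiff ℝ ∞ G) (x : E) :
    HasFDerivAt (Fsym D G) ((Fintype.card (weylGroup D) : ℝ)⁻¹ • ∑ w : weylGroup D,
      (fderiv ℝ G (w.1 x)).comp (w.1.toContinuousLinearEquiv : E →L[ℝ] E)) x := by
  unfold Fsym
  refine HasFDerivAt.const_mul (HasFDerivAt.fun_sum fun w _ => ?_) _
  exact HasFDerivAt.comp x ((hG.differentiable (by simp)) (w.1 x)).hasFDerivAt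
    (w.1.toContinuousLinearEquiv : E →L[ℝ] E).hasFDerivAt

theorem regular_weyl_apply {x : E} (hx : HORegular D x) (w : weylGroup D) :
    HORegular D (w.1 x) := by
  intro α hα
  rw [inner_weyl_apply]
  exact hx _ (weylGroup_inv_mem w α hα)

/-- The symmetrized singular terms of the Cherednik system cancel. -/
theorem sum_weyl_refl_eq {α : E} (hα : α ∈ D.R) (ξ x : E) (hx : ∀ w : weylGroup D, ⟪α, w.1 x⟫ ≠ 0)
    (g : weylGroup D → ℝ) :
    ∑ w : weylGroup D, D.k α * ⟪α, w.1 ξ⟫ / (1 - Real.exp (-⟪α, w.1 x⟫)) *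
      (g (weylRefl D α * w) - g w) = -∑ w : weylGroup D, D.k α * ⟪α, w.1 ξ⟫ * g w := by
  have h1 : ∑ w : weylGroup D, D.k α * ⟪α, w.1 ξ⟫ / (1 - Real.exp (-⟪α, w.1 x⟫)) *
      g (weylRefl D α * w) =
      ∑ w : weylGroup D, -(D.k α * ⟪α, w.1 ξ⟫ / (1 - Real.exp ⟪α, w.1 x⟫) * g w) := by
    refine Fintype.sum_equiv (Equiv.mulLeft (weylRefl D α)) _ _ fun w => ?_
    simp only [Equiv.coe_mulLeft]
    rw [weylRefl_mul_apply hα, weylRefl_mul_apply hα, inner_rRefl_self (D.root_ne_zero α hα),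
      inner_rRefl_self (D.root_ne_zero α hα)]
    ring
  simp only [mul_sub]
  rw [Finset.sum_sub_distrib, h1, ← Finset.sum_sub_distrib, ← Finset.sum_neg_distrib]
  refine Finset.sum_congr rfl fun w _ => ?_
  have h2 := one_sub_exp_neg_ne_zero (hx w)
  have h3 := one_sub_exp_neg_ne_zero (neg_ne_zero.2 (hx w))
  rw [neg_neg] at h3
  have h6 : (1 - Real.exp ⟪α, w.1 x⟫)⁻¹ + (1 - Real.exp (-⟪α, w.1 x⟫))⁻¹ = 1 := by
    have h7 : Real.exp ⟪α, w.1 x⟫ * Real.exp (-⟪α, w.1 x⟫) = 1 := by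
      rw [← Real.exp_add, add_neg_cancel, Real.exp_zero]
    rw [inv_add_inv h3 h2, div_eq_one_iff_eq (mul_ne_zero h3 h2)]
    linear_combination -h7
  simp only [div_eq_mul_inv]
  linear_combination -(D.k α * ⟪α, w.1 ξ⟫ * g w) * h6

theorem IsOpdamR.fderiv_Fsym {G : E → ℝ} (hG : IsOpdamR D 0 G) (ξ x : E) :
    fderiv ℝ (Fsym D G) x ξ =
      (Fintype.card (weylGroup D) : ℝ)⁻¹ * ∑ w : weylGroup D, -⟪rhoHO D, w.1 ξ⟫ * G (w.1 x) := by
  have hF : ∀ x, fderiv ℝ (Fsym D G) x ξ = (Fintype.card (weylGroup D) : ℝ)⁻¹ *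
      ∑ w : weylGroup D, fderiv ℝ G (w.1 x) (w.1 ξ) := by
    intro x
    rw [(hasFDerivAt_Fsym hG.contDiff x).fderiv]
    simp
  have hc := hG.contDiff.continuous
  have hc' : Continuous (fderiv ℝ G) := hG.contDiff.continuous_fderiv (by simp)
  have hw : ∀ w : weylGroup D, Continuous w.1 := fun w => w.1.continuous
  refine eq_of_eq_regular D (f := fun x => fderiv ℝ (Fsym D G) x ξ)
    (g := fun x => (Fintype.card (weylGroup D) : ℝ)⁻¹ *
      ∑ w : weylGroup D, -⟪rhoHO D, w.1 ξ⟫ * G (w.1 x)) ?_ ?_ fun y hy => ?_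
  · simp only [hF]
    exact (continuous_const.mul (continuous_finsetSum _ fun w _ =>
      (hc'.comp (hw w)).clm_apply continuous_const)).continuousAt
  · exact (continuous_const.mul (continuous_finsetSum _ fun w _ =>
      continuous_const.mul (hc.comp (hw w)))).continuousAt
  · rw [hF]
    congr 1
    have h1 : ∀ w : weylGroup D, fderiv ℝ G (w.1 y) (w.1 ξ) =
        ∑ α ∈ D.Rpos, D.k α * ⟪α, w.1 ξ⟫ / (1 - Real.exp (-⟪α, w.1 y⟫)) *
          (G ((weylRefl D α * w).1 y) - G (w.1 y)) + ⟪rhoHO D, w.1 ξ⟫ * G (w.1 y) := by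
      intro w
      rw [hG.2.2 _ _ (regular_weyl_apply hy w), add_zero]
      congr 1
      refine Finset.sum_congr rfl fun α hα => ?_
      rw [weylRefl_mul_apply (D.pos_subset hα)]
    simp only [h1]
    rw [Finset.sum_add_distrib, Finset.sum_comm]
    have h2 : ∀ α ∈ D.Rpos, ∑ w : weylGroup D, D.k α * ⟪α, w.1 ξ⟫ /
        (1 - Real.exp (-⟪α, w.1 y⟫)) * (G ((weylRefl D α * w).1 y) - G (w.1 y)) =
        -∑ w : weylGroup D, D.k α * ⟪α, w.1 ξ⟫ * G (w.1 y) := fun α hα =>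
      sum_weyl_refl_eq (D.pos_subset hα) ξ y
        (fun w => regular_weyl_apply hy w α (D.pos_subset hα)) fun w => G (w.1 y)
    rw [Finset.sum_congr rfl h2, Finset.sum_neg_distrib, Finset.sum_comm, neg_add_eq_sub,
      ← Finset.sum_sub_distrib]
    refine Finset.sum_congr rfl fun w _ => ?_
    have h3 : ∑ α ∈ D.Rpos, D.k α * ⟪α, w.1 ξ⟫ = 2 * ⟪rhoHO D, w.1 ξ⟫ := by
      rw [rhoHO, real_inner_smul_left, sum_inner, mul_inv_cancel_left₀ two_ne_zero]
      simp only [real_inner_smul_left]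
    rw [← Finset.sum_mul, h3]
    ring

theorem IsOpdamR.abs_fderiv_Fsym_le {G : E → ℝ} (hG : IsOpdamR D 0 G) (ξ x : E) :
    |fderiv ℝ (Fsym D G) x ξ| ≤ ‖rhoHO D‖ * ‖ξ‖ * Fsym D G x := by
  rw [hG.fderiv_Fsym, abs_mul, abs_of_pos (inv_pos.2 card_weylGroup_pos), Fsym, mul_left_comm,
    Finset.mul_sum]
  refine mul_le_mul_of_nonneg_left ?_ (inv_pos.2 card_weylGroup_pos).le
  refine (Finset.abs_sum_le_sum_abs _ _).trans (Finset.sum_le_sum fun w _ => ?_)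
  rw [abs_mul, abs_neg, abs_of_nonneg (hG.nonneg _)]
  exact mul_le_mul_of_nonneg_right (abs_inner_rho_weyl_le w ξ) (hG.nonneg _)

/-- Harnack inequality for the symmetrized function. -/
theorem IsOpdamR.Fsym_le_exp_mul {G : E → ℝ} (hG : IsOpdamR D 0 G) (x y : E) :
    Fsym D G y ≤ Real.exp (‖rhoHO D‖ * ‖y - x‖) * Fsym D G x := by
  set c := ‖rhoHO D‖ * ‖y - x‖ with hc
  have hder : ∀ t : ℝ, HasDerivAt (fun s : ℝ => Real.exp (-c * s) * Fsym D G (x + s • (y - x)))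
      (Real.exp (-c * t) * -c * Fsym D G (x + t • (y - x)) +
        Real.exp (-c * t) * fderiv ℝ (Fsym D G) (x + t • (y - x)) (y - x)) t := by
    intro t
    have h1 : HasDerivAt (fun s : ℝ => Real.exp (-c * s)) (Real.exp (-c * t) * -c) t := by
      simpa using ((hasDerivAt_id t).const_mul (-c)).exp
    refine h1.mul ?_
    have h2 : HasDerivAt (fun s : ℝ => x + s • (y - x)) (y - x) t := by
      simpa using ((hasDerivAt_id t).smul_const (y - x)).const_add x
    exact (hasFDerivAt_Fsym hG.contDiff _).differentiableAt.hasFDerivAt.comp_hasDerivAt t h2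
  have hanti : Antitone (fun s : ℝ => Real.exp (-c * s) * Fsym D G (x + s • (y - x))) := by
    refine antitone_of_hasDerivAt_nonpos hder fun t => ?_
    have h1 := (abs_le.1 (hG.abs_fderiv_Fsym_le (y - x) (x + t • (y - x)))).2
    have h2 := mul_le_mul_of_nonneg_left h1 (Real.exp_pos (-c * t)).le
    rw [← hc] at h2
    rw [Pi.zero_apply]
    linarith
  have h := hanti zero_le_one
  simp only [mul_one, one_smul, mul_zero, Real.exp_zero, zero_smul, add_zero, one_mul,
    add_sub_cancel, Real.exp_neg] at h
  rwa [inv_mul_le_iff₀ (Real.exp_pos c)] at h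

/-- The majorant `F₀(x) e^{max_w (w λ, x)}`. -/
def majorantHO (D : HOData E) [Fintype (weylGroup D)] (G₀ : E → ℝ) (l x : E) : ℝ :=
  Fsym D G₀ x * Real.exp (maxW D l x)

theorem IsOpdamR.majorantHO_pos {G : E → ℝ} (hG : IsOpdamR D 0 G) (l x : E) :
    0 < majorantHO D G l x := mul_pos (hG.Fsym_pos x) (Real.exp_pos _)

theorem IsOpdamC.norm_le_majorantHO {l₁ l₂ : E} {G : E → ℂ} (hG : IsOpdamC D l₁ l₂ G)
    {G₀ : E → ℝ} (hG₀ : IsOpdamR D 0 G₀) (x : E) :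
    ‖G x‖ ≤ Fintype.card (weylGroup D) * majorantHO D G₀ l₁ x := by
  rw [majorantHO, ← mul_assoc]
  exact (hG.norm_le hG₀ x).trans
    (mul_le_mul_of_nonneg_right (hG₀.le_card_mul_Fsym x) (Real.exp_pos _).le)

theorem IsOpdamR.majorantHO_weyl_apply_le {G : E → ℝ} (hG : IsOpdamR D 0 G) (l : E)
    (w : weylGroup D) (x : E) : majorantHO D G l (w.1 x) ≤ majorantHO D G l x := by
  rw [majorantHO, majorantHO, Fsym_weyl_apply]
  exact mul_le_mul_of_nonneg_left (Real.exp_le_exp.2 (maxW_weyl_apply_le D w l x))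
    (hG.Fsym_pos x).le

theorem IsOpdamR.majorantHO_le_of_norm_sub_le {G : E → ℝ} (hG : IsOpdamR D 0 G) {l x y : E}
    (h1 : ‖y - x‖ ≤ 1) (h2 : ‖l‖ * ‖y - x‖ ≤ 1) :
    majorantHO D G l y ≤ Real.exp (‖rhoHO D‖ + 1) * majorantHO D G l x := by
  have h3 : Fsym D G y ≤ Real.exp ‖rhoHO D‖ * Fsym D G x := by
    refine (hG.Fsym_le_exp_mul x y).trans (mul_le_mul_of_nonneg_right ?_ (hG.Fsym_pos x).le)
    exact Real.exp_le_exp.2 (mul_le_of_le_one_right (norm_nonneg _) h1)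
  have h4 : Real.exp (maxW D l y) ≤ Real.exp (maxW D l x) * Real.exp 1 := by
    rw [← Real.exp_add]
    exact Real.exp_le_exp.2 ((maxW_le_add_norm_right D l x y).trans (by linarith))
  calc majorantHO D G l y ≤ (Real.exp ‖rhoHO D‖ * Fsym D G x) *
        (Real.exp (maxW D l x) * Real.exp 1) :=
        mul_le_mul h3 h4 (Real.exp_pos _).le
          (mul_nonneg (Real.exp_pos _).le (hG.Fsym_pos x).le)
    _ = Real.exp (‖rhoHO D‖ + 1) * majorantHO D G l x := by
      rw [majorantHO, Real.exp_add]
      ring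

end Harnack

section CoefficientBounds

open scoped ContDiff Topology

theorem abs_iteratedDeriv_sub_const_le {s s₀ u : ℝ} (hu : 0 < u) (h : |s - s₀| ≤ u⁻¹) (i : ℕ) :
    |iteratedDeriv i (fun v : ℝ => v - s₀) s| ≤ u ^ i * u⁻¹ := by
  rcases i with _ | i
  · simpa using h
  · have hd : deriv (fun v : ℝ => v - s₀) = fun _ => (1 : ℝ) := by
      funext v
      simp
    rw [iteratedDeriv_succ', hd, iteratedDeriv_const]
    split_ifs with h0
    · subst h0
      simp [hu.ne']
    · simp only [abs_zero]
      positivity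

theorem exists_iteratedDeriv_sub_mul_psiHO_le (j : ℕ) :
    ∃ C : ℝ, 0 ≤ C ∧ ∀ s s₀ u : ℝ, 1 ≤ u → |s - s₀| ≤ u⁻¹ → u⁻¹ / 2 ≤ |s| →
      |iteratedDeriv j (fun v => (v - s₀) * psiHO v) s| ≤ C * u ^ j := by
  choose C hC0 hC using exists_iteratedDeriv_psiHO_le
  refine ⟨∑ i ∈ Finset.range (j + 1), (j.choose i : ℝ) * C (j - i) * 3 ^ (j - i + 1),
    Finset.sum_nonneg fun i _ => by have := hC0 (j - i); positivity, fun s s₀ u hu h1 h2 => ?_⟩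
  have hu0 : 0 < u := by linarith
  have hui : 0 < u⁻¹ := inv_pos.2 hu0
  have hs : s ≠ 0 := abs_pos.1 (by linarith)
  have hψ : ContDiffAt ℝ j psiHO s := (contDiffOn_psiHO.contDiffAt (isOpen_ne.mem_nhds hs)).of_le
    (by exact_mod_cast le_top)
  rw [iteratedDeriv_fun_mul (by fun_prop) hψ, Finset.sum_mul]
  refine (Finset.abs_sum_le_sum_abs _ _).trans (Finset.sum_le_sum fun i hi => ?_)
  have hij : i ≤ j := Nat.lt_succ_iff.1 (Finset.mem_range.1 hi)
  rw [abs_mul, abs_mul, Nat.abs_cast]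
  have h3 : 1 + |s|⁻¹ ≤ 3 * u := by
    have h4 : |s|⁻¹ ≤ (u⁻¹ / 2)⁻¹ := inv_anti₀ (by positivity) h2
    have h5 : (u⁻¹ / 2)⁻¹ = 2 * u := by field_simp
    linarith
  have h6 : |iteratedDeriv (j - i) psiHO s| ≤ C (j - i) * (3 * u) ^ (j - i + 1) := by
    refine (hC (j - i) s hs).trans (mul_le_mul_of_nonneg_left ?_ (hC0 _))
    exact pow_le_pow_left₀ (by positivity) h3 _
  have h7 := abs_iteratedDeriv_sub_const_le hu0 h1 i
  calc (j.choose i : ℝ) * |iteratedDeriv i (fun v => v - s₀) s| * |iteratedDeriv (j - i) psiHO s|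
      ≤ j.choose i * (u ^ i * u⁻¹) * (C (j - i) * (3 * u) ^ (j - i + 1)) := by
        gcongr
    _ = j.choose i * C (j - i) * 3 ^ (j - i + 1) * u ^ j := by
        have h8 : u ^ j = u ^ i * u ^ (j - i) := by rw [← pow_add, Nat.add_sub_cancel' hij]
        rw [h8, mul_pow, pow_succ u]
        field_simp

theorem exists_iteratedFDeriv_coefHO_le (D : HOData E) (j : ℕ) :
    ∃ C : ℝ, 0 ≤ C ∧ ∀ α ∈ D.Rpos, ∀ (p y : E) (u : ℝ), 1 ≤ u → |⟪α, y⟫ - ⟪α, p⟫| ≤ u⁻¹ →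
      (⟪α, p⟫ = 0 ∨ u⁻¹ / 2 ≤ |⟪α, y⟫|) →
      ‖iteratedFDeriv ℝ j (coefHO D p α) y‖ ≤ C * u ^ j := by
  obtain ⟨C₁, hC₁, h₁⟩ := exists_iteratedDeriv_sub_mul_psiHO_le j
  obtain ⟨C₂, hC₂, h₂⟩ := exists_iteratedDeriv_phiHO_le j 1
  have hk : ∀ α ∈ D.Rpos, 0 ≤ D.k α * ‖α‖ ^ j := fun α hα =>
    mul_nonneg (D.k_pos α (D.pos_subset hα)).le (by positivity)
  refine ⟨∑ α ∈ D.Rpos, D.k α * ‖α‖ ^ j * (C₁ + C₂), Finset.sum_nonneg fun α hα =>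
    mul_nonneg (hk α hα) (by positivity), fun α hα p y u hu h1 h2 => ?_⟩
  have hu0 : 0 < u := by linarith
  have hk0 := (D.k_pos α (D.pos_subset hα)).le
  have hsum : D.k α * ‖α‖ ^ j * (C₁ + C₂) ≤ ∑ α ∈ D.Rpos, D.k α * ‖α‖ ^ j * (C₁ + C₂) :=
    Finset.single_le_sum (f := fun α => D.k α * ‖α‖ ^ j * (C₁ + C₂))
      (fun α hα => mul_nonneg (hk α hα) (by positivity)) hα
  refine le_trans ?_ (mul_le_mul_of_nonneg_right hsum (by positivity))
  have key : ∀ (f : ℝ → ℝ) (U : Set ℝ), IsOpen U → ContDiffOn ℝ ∞ f U → ⟪α, y⟫ ∈ U →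
      |iteratedDeriv j f ⟪α, y⟫| ≤ (C₁ + C₂) * u ^ j →
      ‖iteratedFDeriv ℝ j (fun z => D.k α * f ⟪α, z⟫) y‖ ≤
        D.k α * ‖α‖ ^ j * (C₁ + C₂) * u ^ j := by
    intro f U hU hf hy hle
    have h3 := norm_iteratedFDeriv_comp_clm_le hU hf (innerSL ℝ α) (y := y) hy j
    have h4 : ContDiffAt ℝ j (fun z => f (innerSL ℝ α z)) y := by
      refine ContDiffAt.comp y (g := f) (f := innerSL ℝ α) ?_ (innerSL ℝ α).contDiff.contDiffAt
      exact (hf.contDiffAt (hU.mem_nhds hy)).of_le (by exact_mod_cast le_top)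
    have h5 : iteratedFDeriv ℝ j (fun z => D.k α * f ⟪α, z⟫) y =
        D.k α • iteratedFDeriv ℝ j (fun z => f (innerSL ℝ α z)) y := by
      rw [← iteratedFDeriv_const_smul_apply' h4]
      rfl
    rw [h5, norm_smul, Real.norm_of_nonneg hk0]
    rw [innerSL_apply_norm] at h3
    calc D.k α * ‖iteratedFDeriv ℝ j (fun z => f (innerSL ℝ α z)) y‖
        ≤ D.k α * ((C₁ + C₂) * u ^ j * ‖α‖ ^ j) := by
          refine mul_le_mul_of_nonneg_left (h3.trans ?_) hk0
          exact mul_le_mul_of_nonneg_right hle (by positivity)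
      _ = _ := by ring
  by_cases h0 : ⟪α, p⟫ = 0
  · have hfun : coefHO D p α = fun z => D.k α * phiHO ⟪α, z⟫ := by
      funext z
      simp [coefHO, h0]
    rw [hfun]
    refine key phiHO Set.univ isOpen_univ contDiff_phiHO.contDiffOn (Set.mem_univ _) ?_
    have h3 : |⟪α, y⟫| ≤ 1 := by
      rw [h0, sub_zero] at h1
      exact h1.trans (inv_le_one_of_one_le₀ hu)
    calc |iteratedDeriv j phiHO ⟪α, y⟫| ≤ C₂ * 1 := by rw [mul_one]; exact h₂ _ h3
      _ ≤ (C₁ + C₂) * u ^ j := by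
        gcongr
        · linarith
        · exact one_le_pow₀ hu
  · have hfun : coefHO D p α = fun z => D.k α * ((⟪α, z⟫ - ⟪α, p⟫) * psiHO ⟪α, z⟫) := by
      funext z
      simp [coefHO, h0, inner_sub_right]
    have h2' := h2.resolve_left h0
    have hne : ⟪α, y⟫ ≠ 0 := abs_pos.1 (lt_of_lt_of_le (by positivity) h2')
    rw [hfun]
    refine key (fun s => (s - ⟪α, p⟫) * psiHO s) {0}ᶜ isOpen_compl_singleton ?_ hne ?_
    · exact (contDiff_id.sub contDiff_const).contDiffOn.mul contDiffOn_psiHO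
    · refine (h₁ _ _ u hu h1 h2').trans ?_
      gcongr
      linarith

theorem norm_iteratedFDeriv_succ_clm_sub_le {V F : Type*} [NormedAddCommGroup V] [NormedSpace ℝ V]
    [NormedAddCommGroup F] [NormedSpace ℝ F] (L : V →L[ℝ] F) (p y : V) (i : ℕ) :
    ‖iteratedFDeriv ℝ (i + 1) (fun z => L (z - p)) y‖ ≤ ‖L‖ := by
  have hd : fderiv ℝ (fun z => L (z - p)) = fun _ => L := by
    funext z
    exact (L.hasFDerivAt.comp z ((hasFDerivAt_id z).sub_const p)).fderiv
  rw [← norm_iteratedFDeriv_fderiv, hd]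
  rcases i with _ | i
  · simp
  · rw [iteratedFDeriv_succ_const]
    simp

theorem norm_iteratedFDeriv_smul_sub_le_of_le {V F K : Type*} [NormedAddCommGroup V]
    [NormedSpace ℝ V] [NormedAddCommGroup F] [NormedSpace ℝ F] [NormedField K] [NormedAlgebra ℝ K]
    [NormedSpace K F] [IsScalarTower ℝ K F] [SMulCommClass ℝ K F]
    {a : V → K} {g : V → F} {U : Set V} (hU : IsOpen U) (ha : ContDiffOn ℝ ∞ a U)
    (hg : ContDiff ℝ ∞ g) {y : V} (hy : y ∈ U) (N : ℕ) {A B : ℕ → ℝ} {Λ m : ℝ} (hΛ : 0 ≤ Λ)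
    (hA0 : ∀ i, 0 ≤ A i)
    (hA : ∀ i, ‖iteratedFDeriv ℝ (i + 1) a y‖ ≤ A (i + 1) * Λ ^ (i + 1))
    (hB : ∀ j < N, ‖iteratedFDeriv ℝ j g y‖ ≤ B j * (Λ ^ j * m)) :
    ‖iteratedFDeriv ℝ N (fun z => a z • g z) y - a y • iteratedFDeriv ℝ N g y‖ ≤
      (∑ i ∈ Finset.range N, (N.choose (i + 1) : ℝ) * A (i + 1) * B (N - (i + 1))) *
        (Λ ^ N * m) := by
  refine (norm_iteratedFDeriv_smul_sub_le hU ha hg hy N).trans ?_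
  rw [Finset.sum_mul]
  refine Finset.sum_le_sum fun i hi => ?_
  have hi' : i + 1 ≤ N := Finset.mem_range.1 hi
  calc (N.choose (i + 1) : ℝ) * ‖iteratedFDeriv ℝ (i + 1) a y‖ *
        ‖iteratedFDeriv ℝ (N - (i + 1)) g y‖
      ≤ N.choose (i + 1) * (A (i + 1) * Λ ^ (i + 1)) *
        (B (N - (i + 1)) * (Λ ^ (N - (i + 1)) * m)) := by
        have := hA0 (i + 1)
        gcongr
        · exact hA i
        · exact hB _ (by omega)
    _ = _ := by
        have h8 : Λ ^ N = Λ ^ (i + 1) * Λ ^ (N - (i + 1)) := by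
          rw [← pow_add, Nat.add_sub_cancel' hi']
        rw [h8]
        ring

/-- The maximum principle step: at a maximum of the modulus, the top order terms absorb. -/
theorem norm_le_two_mul_of_absorb {ι : Type*} (s : Finset ι) {N : ℕ} (hN : 1 ≤ N) {u du b e : ℂ}
    {v : ι → ℂ} {a δ : ι → ℝ} (hdu : 0 ≤ ⟪u, du⟫) (hv : ∀ i ∈ s, ‖v i‖ ≤ ‖u‖)
    (heq : du + (N : ℝ) • u = ∑ i ∈ s, a i • (v i - u) + b * u + e)
    (hδ : ∀ i ∈ s, 0 ≤ δ i) (ha : ∀ i ∈ s, 0 ≤ a i ∨ |a i| ≤ δ i)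
    (hsmall : 2 * ∑ i ∈ s, δ i + ‖b‖ ≤ 1 / 2) : ‖u‖ ≤ 2 * ‖e‖ := by
  have h1 := congrArg (fun z => ⟪u, z⟫) heq
  simp only [inner_add_right, inner_sum, real_inner_smul_right, inner_sub_right,
    real_inner_self_eq_norm_sq] at h1
  have h2 : ∑ i ∈ s, a i * (⟪u, v i⟫ - ‖u‖ ^ 2) ≤ ∑ i ∈ s, δ i * (2 * ‖u‖ ^ 2) := by
    refine Finset.sum_le_sum fun i hi => ?_
    have h3 : |⟪u, v i⟫| ≤ ‖u‖ ^ 2 := by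
      rw [sq]
      exact (abs_real_inner_le_norm _ _).trans
        (mul_le_mul_of_nonneg_left (hv i hi) (norm_nonneg _))
    obtain ⟨h3l, h3r⟩ := abs_le.1 h3
    have h6 := hδ i hi
    rcases ha i hi with h4 | h4
    · have h5 : a i * (⟪u, v i⟫ - ‖u‖ ^ 2) ≤ 0 :=
        mul_nonpos_of_nonneg_of_nonpos h4 (by linarith)
      exact h5.trans (by positivity)
    · refine (le_abs_self _).trans ?_
      rw [abs_mul]
      exact mul_le_mul h4 (abs_le.2 ⟨by linarith, by nlinarith [sq_nonneg ‖u‖]⟩) (abs_nonneg _) h6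
  have h3 : ⟪u, b * u⟫ ≤ ‖b‖ * ‖u‖ ^ 2 := by
    refine (real_inner_le_norm _ _).trans ?_
    rw [norm_mul]
    exact le_of_eq (by ring)
  have h4 := real_inner_le_norm u e
  have h5 : (1 : ℝ) ≤ N := by exact_mod_cast hN
  rw [← Finset.sum_mul] at h2
  have h6 : ‖u‖ * ‖u‖ ≤ ‖u‖ * (2 * ‖e‖) := by
    have h7 := mul_le_mul_of_nonneg_right hsmall (sq_nonneg ‖u‖)
    have h8 := mul_le_mul_of_nonneg_right h5 (sq_nonneg ‖u‖)
    nlinarith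
  rcases (norm_nonneg u).eq_or_lt with h0 | h0
  · rw [← h0]
    positivity
  · exact le_of_mul_le_mul_left h6 h0

end CoefficientBounds

section SpaceDerivatives

open scoped ContDiff Topology

variable {D : HOData E}

/-- The real-linear functional `ξ ↦ (m + i l, ξ)`. -/
def specCLM (m l : E) : E →L[ℝ] ℂ :=
  Complex.ofRealCLM ∘L innerSL ℝ m + Complex.I • (Complex.ofRealCLM ∘L innerSL ℝ l)

theorem specCLM_apply (m l ξ : E) :
    specCLM m l ξ = ((⟪m, ξ⟫ : ℝ) : ℂ) + Complex.I * ((⟪l, ξ⟫ : ℝ) : ℂ) := by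
  simp [specCLM]

theorem norm_specCLM_le (m l : E) : ‖specCLM m l‖ ≤ ‖m‖ + ‖l‖ := by
  refine ContinuousLinearMap.opNorm_le_bound _ (by positivity) fun ξ => ?_
  rw [specCLM_apply, add_mul]
  refine (norm_add_le _ _).trans (add_le_add ?_ ?_)
  · rw [Complex.norm_real]
    exact norm_inner_le_norm m ξ
  · rw [norm_mul, Complex.norm_I, one_mul, Complex.norm_real]
    exact norm_inner_le_norm l ξ

theorem contDiff_comp_weyl {G : E → ℂ} (hG : ContDiff ℝ ∞ G) (w : weylGroup D) :
    ContDiff ℝ ∞ fun z => G (w.1 z) := hG.comp w.1.contDiff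

theorem norm_iteratedFDeriv_comp_weyl {F : Type*} [NormedAddCommGroup F] [NormedSpace ℝ F]
    (G : E → F) (w : weylGroup D) (j : ℕ) (z : E) :
    ‖iteratedFDeriv ℝ j (fun z => G (w.1 z)) z‖ = ‖iteratedFDeriv ℝ j G (w.1 z)‖ :=
  w.1.norm_iteratedFDeriv_comp_right G z j

theorem weyl_domain {p z : E} (h : ∀ α ∈ D.R, ⟪α, p⟫ = 0 ∨ ⟪α, z⟫ ≠ 0) (w : weylGroup D) {α : E}
    (hα : α ∈ D.R) : ⟪α, w.1 p⟫ = 0 ∨ ⟪α, w.1 z⟫ ≠ 0 := by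
  rw [inner_weyl_apply, inner_weyl_apply]
  exact h _ (weylGroup_inv_mem w α hα)

theorem IsOpdamC.fderiv_comp_weyl_euler {l₁ l₂ : E} {G : E → ℂ} (hG : IsOpdamC D l₁ l₂ G)
    (w : weylGroup D) {p z : E} (h : ∀ α ∈ D.R, ⟪α, p⟫ = 0 ∨ ⟪α, z⟫ ≠ 0) :
    fderiv ℝ (fun z => G (w.1 z)) z (z - p) =
      ∑ α ∈ D.Rpos, coefHO D (w.1 p) α (w.1 z) • (G ((weylRefl D α * w).1 z) - G (w.1 z)) +
        specCLM (rhoHO D + l₁) l₂ (w.1 (z - p)) • G (w.1 z) := by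
  have h1 : HasFDerivAt (fun z => G (w.1 z))
      ((fderiv ℝ G (w.1 z)).comp (w.1.toContinuousLinearEquiv : E →L[ℝ] E)) z :=
    HasFDerivAt.comp z ((hG.contDiff.differentiable (by simp)) (w.1 z)).hasFDerivAt
      (w.1.toContinuousLinearEquiv : E →L[ℝ] E).hasFDerivAt
  have h2 : fderiv ℝ (fun z => G (w.1 z)) z (z - p) = fderiv ℝ G (w.1 z) (w.1 z - w.1 p) := by
    rw [h1.fderiv, ← map_sub]
    rfl
  rw [h2, hG.fderiv_euler fun α hα => weyl_domain h w (D.pos_subset hα), smul_eq_mul,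
    specCLM_apply, map_sub]
  congr 1
  refine Finset.sum_congr rfl fun α hα => ?_
  rw [weylRefl_mul_apply (D.pos_subset hα)]

/-- The iterated derivatives of an Opdam function satisfy the Euler system up to lower order. -/
theorem IsOpdamC.exists_iteratedFDeriv_euler {l₁ l₂ : E} {G : E → ℂ} (hG : IsOpdamC D l₁ l₂ G)
    (w : weylGroup D) {p y : E} (h : ∀ α ∈ D.R, ⟪α, p⟫ = 0 ∨ ⟪α, y⟫ ≠ 0) (N : ℕ)
    {K B : ℕ → ℝ} {Λ m : ℝ} (hΛ : 0 ≤ Λ) (hK0 : ∀ i, 0 ≤ K i)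
    (hK : ∀ α ∈ D.Rpos, ∀ i,
      ‖iteratedFDeriv ℝ (i + 1) (coefHO D (w.1 p) α) (w.1 y)‖ ≤ K (i + 1) * Λ ^ (i + 1))
    (hL : ∀ i, ‖specCLM (rhoHO D + l₁) l₂‖ ≤ K (i + 1) * Λ ^ (i + 1))
    (hB : ∀ v : weylGroup D, ∀ j < N, ‖iteratedFDeriv ℝ j G (v.1 y)‖ ≤ B j * (Λ ^ j * m))
    (ξ : Fin N → E) :
    ∃ e : ℂ, fderiv ℝ (fun z => iteratedFDeriv ℝ N (fun z => G (w.1 z)) z ξ) y (y - p) +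
        (N : ℝ) • iteratedFDeriv ℝ N (fun z => G (w.1 z)) y ξ =
        ∑ α ∈ D.Rpos, coefHO D (w.1 p) α (w.1 y) •
          (iteratedFDeriv ℝ N (fun z => G ((weylRefl D α * w).1 z)) y ξ -
            iteratedFDeriv ℝ N (fun z => G (w.1 z)) y ξ) +
        specCLM (rhoHO D + l₁) l₂ (w.1 (y - p)) * iteratedFDeriv ℝ N (fun z => G (w.1 z)) y ξ + e ∧
      ‖e‖ ≤ (2 * D.Rpos.card + 1) *
        (∑ i ∈ Finset.range N, (N.choose (i + 1) : ℝ) * K (i + 1) * B (N - (i + 1))) *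
        (Λ ^ N * m) * ∏ i, ‖ξ i‖ := by
  set S := ∑ i ∈ Finset.range N, (N.choose (i + 1) : ℝ) * K (i + 1) * B (N - (i + 1)) with hS
  let g : weylGroup D → E → ℂ := fun v z => G (v.1 z)
  have hg : ∀ v, ContDiff ℝ ∞ (g v) := fun v => contDiff_comp_weyl hG.contDiff v
  have hNle : ((N : ℕ∞ω)) ≤ ∞ := by exact_mod_cast le_top
  have hgN : ∀ v, ContDiff ℝ N (g v) := fun v => (hg v).of_le hNle
  let L : E →L[ℝ] ℂ := (specCLM (rhoHO D + l₁) l₂) ∘L (w.1.toContinuousLinearEquiv : E →L[ℝ] E)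
  have hLnorm : ‖L‖ ≤ ‖specCLM (rhoHO D + l₁) l₂‖ := by
    refine ContinuousLinearMap.opNorm_le_bound _ (norm_nonneg _) fun z => ?_
    have := (specCLM (rhoHO D + l₁) l₂).le_opNorm (w.1 z)
    rwa [norm_weyl_apply] at this
  let a : E → E → ℝ := fun α z => coefHO D (w.1 p) α (w.1 z)
  let U : E → Set E := fun α => w.1 ⁻¹' {x | ⟪α, w.1 p⟫ = 0 ∨ ⟪α, x⟫ ≠ 0}
  have hU : ∀ α, IsOpen (U α) := fun α =>
    (isOpen_coefHO_domain (w.1 p) α).preimage w.1.continuous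
  have ha : ∀ α, ContDiffOn ℝ ∞ (a α) (U α) := fun α =>
    (contDiffOn_coefHO D (w.1 p) α).comp w.1.contDiff.contDiffOn fun z hz => hz
  have hyU : ∀ α ∈ D.Rpos, y ∈ U α := fun α hα => weyl_domain h w (D.pos_subset hα)
  have hEuler : (fun z => fderiv ℝ (g w) z (z - p)) =ᶠ[𝓝 y] fun z =>
      ∑ α ∈ D.Rpos, a α z • (g (weylRefl D α * w) z - g w z) + L (z - p) • g w z := by
    have hev : ∀ᶠ z in 𝓝 y, ∀ α ∈ D.R, ⟪α, p⟫ = 0 ∨ ⟪α, z⟫ ≠ 0 :=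
      (Finset.eventually_all D.R).2 fun α hα => (isOpen_coefHO_domain p α).mem_nhds (h α hα)
    filter_upwards [hev] with z hz
    exact hG.fderiv_comp_weyl_euler w hz
  have hda : ∀ α ∈ D.Rpos, ContDiffAt ℝ N (a α) y := fun α hα =>
    ((ha α).contDiffAt ((hU α).mem_nhds (hyU α hα))).of_le hNle
  have hterm : ∀ α ∈ D.Rpos, ContDiffAt ℝ N
      (fun z => a α z • (g (weylRefl D α * w) z - g w z)) y := fun α hα =>
    (hda α hα).smul ((hgN _).sub (hgN _)).contDiffAt
  have hLc : ContDiff ℝ ∞ fun z => L (z - p) := L.contDiff.comp (by fun_prop)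
  have hLterm : ContDiffAt ℝ N (fun z => L (z - p) • g w z) y :=
    (hLc.of_le hNle).contDiffAt.smul (hgN w).contDiffAt
  have hsplit : iteratedFDeriv ℝ N (fun z => fderiv ℝ (g w) z (z - p)) y =
      ∑ α ∈ D.Rpos, iteratedFDeriv ℝ N (fun z => a α z • (g (weylRefl D α * w) z - g w z)) y +
        iteratedFDeriv ℝ N (fun z => L (z - p) • g w z) y := by
    rw [(hEuler.iteratedFDeriv ℝ N).eq_of_nhds,
      fun_iteratedFDeriv_add_apply (ContDiffAt.sum hterm) hLterm,
      iteratedFDeriv_fun_sum_apply hterm]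
  have hsub : ∀ (v : weylGroup D) (j : ℕ), iteratedFDeriv ℝ j (fun z => g v z - g w z) y =
      iteratedFDeriv ℝ j (g v) y - iteratedFDeriv ℝ j (g w) y := fun v j =>
    fun_iteratedFDeriv_sub_apply ((hg v).of_le (by exact_mod_cast le_top)).contDiffAt
      ((hg w).of_le (by exact_mod_cast le_top)).contDiffAt
  have hgB : ∀ (v : weylGroup D), ∀ j < N, ‖iteratedFDeriv ℝ j (g v) y‖ ≤ B j * (Λ ^ j * m) := by
    intro v j hj
    rw [norm_iteratedFDeriv_comp_weyl]
    exact hB v j hj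
  have e1 : ∀ α ∈ D.Rpos,
      ‖iteratedFDeriv ℝ N (fun z => a α z • (g (weylRefl D α * w) z - g w z)) y -
        a α y • (iteratedFDeriv ℝ N (g (weylRefl D α * w)) y - iteratedFDeriv ℝ N (g w) y)‖ ≤
        2 * S * (Λ ^ N * m) := by
    intro α hα
    rw [← hsub]
    refine (norm_iteratedFDeriv_smul_sub_le_of_le (A := K) (B := fun j => 2 * B j) (Λ := Λ)
      (m := m) (hU α) (ha α) ((hg _).sub (hg _)) (hyU α hα) N hΛ hK0 (fun i => ?_)
      fun j hj => ?_).trans (le_of_eq ?_)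
    · rw [norm_iteratedFDeriv_comp_weyl (coefHO D (w.1 p) α) w]
      exact hK α hα i
    · rw [hsub]
      refine (norm_sub_le _ _).trans ?_
      have h1 := hgB (weylRefl D α * w) j hj
      have h2 := hgB w j hj
      linarith
    · rw [hS, Finset.mul_sum]
      congr 1
      exact Finset.sum_congr rfl fun i _ => by ring
  have e2 : ‖iteratedFDeriv ℝ N (fun z => L (z - p) • g w z) y -
      L (y - p) • iteratedFDeriv ℝ N (g w) y‖ ≤ S * (Λ ^ N * m) :=
    norm_iteratedFDeriv_smul_sub_le_of_le (A := K) (B := B) isOpen_univ hLc.contDiffOn (hg w)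
      (Set.mem_univ y) N hΛ hK0
      (fun i => (norm_iteratedFDeriv_succ_clm_sub_le L p y i).trans (hLnorm.trans (hL i))) (hgB w)
  let Err := ∑ α ∈ D.Rpos,
      (iteratedFDeriv ℝ N (fun z => a α z • (g (weylRefl D α * w) z - g w z)) y -
        a α y • (iteratedFDeriv ℝ N (g (weylRefl D α * w)) y - iteratedFDeriv ℝ N (g w) y)) +
      (iteratedFDeriv ℝ N (fun z => L (z - p) • g w z) y -
        L (y - p) • iteratedFDeriv ℝ N (g w) y)
  have hErr : ‖Err‖ ≤ (2 * D.Rpos.card + 1) * S * (Λ ^ N * m) := by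
    refine (norm_add_le _ _).trans ?_
    have h1 := (norm_sum_le _ _).trans (Finset.sum_le_sum e1)
    rw [Finset.sum_const, nsmul_eq_mul] at h1
    linarith
  refine ⟨Err ξ, ?_, ?_⟩
  · have h1 := congrArg (fun f => f ξ) hsplit
    rw [iteratedFDeriv_euler (hg w)] at h1
    refine h1.trans ?_
    simp only [Err, add_apply, sum_apply, sub_apply, smul_apply,
      Finset.sum_sub_distrib, smul_eq_mul]
    change _ = ∑ α ∈ D.Rpos, a α y • (iteratedFDeriv ℝ N (g (weylRefl D α * w)) y ξ -
      iteratedFDeriv ℝ N (g w) y ξ) + L (y - p) * iteratedFDeriv ℝ N (g w) y ξ + _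
    ring
  · exact (Err.le_opNorm ξ).trans (mul_le_mul_of_nonneg_right hErr (by positivity))

end SpaceDerivatives

section SpaceEstimate

open scoped ContDiff Topology

variable {D : HOData E}

/-- A maximum principle for the Euler system along a segment ending at `x`. -/
theorem norm_le_of_euler_system [Finite (weylGroup D)] {u : weylGroup D → E → ℂ}
    (hu : ∀ w, Differentiable ℝ (u w)) {p x : E} {N : ℕ} (hN : 1 ≤ N) {δ : E → ℝ} {Q : ℝ}
    (hδ : ∀ α ∈ D.Rpos, 0 ≤ δ α)
    (h : ∀ (w : weylGroup D) (y : E), (∃ t ∈ Set.Icc (0 : ℝ) 1, y = p + t • (x - p)) →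
      ∃ (a : E → ℝ) (b e : ℂ), fderiv ℝ (u w) y (y - p) + (N : ℝ) • u w y =
          ∑ α ∈ D.Rpos, a α • (u (weylRefl D α * w) y - u w y) + b * u w y + e ∧
        (∀ α ∈ D.Rpos, 0 ≤ a α ∨ |a α| ≤ δ α) ∧ 2 * ∑ α ∈ D.Rpos, δ α + ‖b‖ ≤ 1 / 2 ∧ ‖e‖ ≤ Q)
    (w : weylGroup D) : ‖u w x‖ ≤ 2 * Q := by
  have hline : ∀ t : ℝ, HasDerivAt (fun t : ℝ => p + t • (x - p)) (x - p) t := fun t => by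
    simpa using ((hasDerivAt_id t).smul_const (x - p)).const_add p
  have hder : ∀ (v : weylGroup D) (t : ℝ), HasDerivAt (fun t : ℝ => u v (p + t • (x - p)))
      (fderiv ℝ (u v) (p + t • (x - p)) (x - p)) t := fun v t =>
    (hu v (p + t • (x - p))).hasFDerivAt.comp_hasDerivAt t (hline t)
  obtain ⟨v, t, ht, hmax, hsign⟩ := exists_max_unitInterval
    (f := fun v t => ‖u v (p + t • (x - p))‖ ^ 2)
    (f' := fun v t => 2 * ⟪u v (p + t • (x - p)), fderiv ℝ (u v) (p + t • (x - p)) (x - p)⟫)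
    fun v t => (hder v t).norm_sq
  set y := p + t • (x - p) with hy
  have hmax' : ∀ v', ∀ s ∈ Set.Icc (0 : ℝ) 1, ‖u v' (p + s • (x - p))‖ ≤ ‖u v y‖ :=
    fun v' s hs => (sq_le_sq₀ (norm_nonneg _) (norm_nonneg _)).1 (hmax v' s hs)
  obtain ⟨a, b, e, heq, ha, hsmall, he⟩ := h v y ⟨t, ht, rfl⟩
  have hyp : y - p = t • (x - p) := by rw [hy, add_sub_cancel_left]
  have hdu : 0 ≤ ⟪u v y, fderiv ℝ (u v) y (y - p)⟫ := by
    rw [hyp, map_smul, real_inner_smul_right]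
    linarith
  have h1 := norm_le_two_mul_of_absorb D.Rpos hN hdu
    (fun α _ => hmax' (weylRefl D α * v) t ht) heq hδ ha hsmall
  have h2 := hmax' w 1 (by simp)
  rw [one_smul, add_sub_cancel] at h2
  linarith

theorem coefHO_nonneg_or_abs_le {α p y : E} {η τ : ℝ} (hα : α ∈ D.Rpos) (hτ : 0 < τ) (hτ1 : τ ≤ 1)
    (hη : 0 ≤ η) (hy : ‖y - p‖ ≤ η * τ) (h : ⟪α, p⟫ = 0 ∨ τ / 2 ≤ |⟪α, y⟫|) :
    0 ≤ coefHO D p α y ∨ |coefHO D p α y| ≤ 3 * (D.k α * ‖α‖) * η := by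
  by_cases hp : ⟪α, p⟫ = 0
  · left
    rw [coefHO, if_pos hp]
    exact k_mul_phiHO_nonneg hα _
  · right
    have hk := (D.k_pos α (D.pos_subset hα)).le
    have hy' := h.resolve_left hp
    have hy0 : 0 < |⟪α, y⟫| := by linarith
    have h1 : |psiHO ⟪α, y⟫| ≤ 3 / τ := by
      refine (abs_psiHO_le (abs_pos.1 hy0)).trans ?_
      have h2 : |⟪α, y⟫|⁻¹ ≤ (τ / 2)⁻¹ := inv_anti₀ (by positivity) hy'
      have h3 : 1 ≤ 1 / τ := (one_le_div hτ).2 hτ1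
      calc 1 + |⟪α, y⟫|⁻¹ ≤ 1 / τ + (τ / 2)⁻¹ := add_le_add h3 h2
        _ = 3 / τ := by field_simp; norm_num
    have h2 : |⟪α, y - p⟫| ≤ ‖α‖ * (η * τ) := (abs_real_inner_le_norm _ _).trans (by gcongr)
    rw [coefHO, if_neg hp, abs_mul, abs_mul, abs_of_nonneg hk]
    calc D.k α * (|⟪α, y - p⟫| * |psiHO ⟪α, y⟫|) ≤ D.k α * (‖α‖ * (η * τ) * (3 / τ)) := by gcongr
      _ = 3 * (D.k α * ‖α‖) * η := by field_simp

/-- The size `1 + |λ|` of the spectral parameter. -/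
def specSize (l₁ l₂ : E) : ℝ := 1 + Real.sqrt (‖l₁‖ ^ 2 + ‖l₂‖ ^ 2)

theorem one_le_specSize (l₁ l₂ : E) : 1 ≤ specSize l₁ l₂ :=
  le_add_of_nonneg_right (Real.sqrt_nonneg _)

theorem norm_fst_le_specSize (l₁ l₂ : E) : ‖l₁‖ ≤ specSize l₁ l₂ - 1 := by
  rw [specSize, add_sub_cancel_left]
  exact Real.le_sqrt_of_sq_le (by nlinarith [sq_nonneg ‖l₂‖])

theorem norm_snd_le_specSize (l₁ l₂ : E) : ‖l₂‖ ≤ specSize l₁ l₂ - 1 := by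
  rw [specSize, add_sub_cancel_left]
  exact Real.le_sqrt_of_sq_le (by nlinarith [sq_nonneg ‖l₁‖])

theorem specSize_le_add (l₁ l₂ : E) : specSize l₁ l₂ ≤ 1 + ‖l₁‖ + ‖l₂‖ := by
  rw [specSize, add_assoc]
  refine add_le_add_right (Real.sqrt_le_iff.2 ⟨by positivity, ?_⟩) 1
  nlinarith [mul_nonneg (norm_nonneg l₁) (norm_nonneg l₂)]

theorem norm_specCLM_rho_le (l₁ l₂ : E) :
    ‖specCLM (rhoHO D + l₁) l₂‖ ≤ (‖rhoHO D‖ + 2) * specSize l₁ l₂ := by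
  have h1 := norm_specCLM_le (rhoHO D + l₁) l₂
  have h2 := norm_add_le (rhoHO D) l₁
  have h3 := norm_fst_le_specSize l₁ l₂
  have h4 := norm_snd_le_specSize l₁ l₂
  have h5 : ‖rhoHO D‖ * 1 ≤ ‖rhoHO D‖ * specSize l₁ l₂ :=
    mul_le_mul_of_nonneg_left (one_le_specSize _ _) (norm_nonneg _)
  linarith

/-- A scale below which all first-order coefficients can be absorbed. -/
theorem exists_absorption_scale (D : HOData E) :
    ∃ η : ℝ, 0 < η ∧ η ≤ 1 ∧ (∀ α ∈ D.R, ‖α‖ * η ≤ 1 / 2) ∧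
      2 * ∑ α ∈ D.Rpos, 3 * (D.k α * ‖α‖) * η + (‖rhoHO D‖ + 2) * η ≤ 1 / 2 := by
  have h1 : 0 ≤ ∑ α ∈ D.Rpos, D.k α * ‖α‖ := Finset.sum_nonneg fun α hα =>
    mul_nonneg (D.k_pos α (D.pos_subset hα)).le (norm_nonneg _)
  have h2 : 0 ≤ ∑ α ∈ D.R, ‖α‖ := Finset.sum_nonneg fun α _ => norm_nonneg _
  have h3 := norm_nonneg (rhoHO D)
  set Bc := 6 * ∑ α ∈ D.Rpos, D.k α * ‖α‖ + ‖rhoHO D‖ + 2 + ∑ α ∈ D.R, ‖α‖ with hBc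
  have hB2 : 2 ≤ Bc := by linarith
  have hη : Bc * (1 / (2 * Bc)) = 1 / 2 := by field_simp
  have hη0 : 0 < 1 / (2 * Bc) := by positivity
  refine ⟨1 / (2 * Bc), hη0, ?_, fun α hα => ?_, ?_⟩
  · nlinarith
  · have h4 : ‖α‖ ≤ Bc := by
      have := Finset.single_le_sum (f := fun α : E => ‖α‖) (fun α _ => norm_nonneg α) hα
      linarith
    rw [← hη]
    gcongr
  · rw [← Finset.sum_mul, ← Finset.mul_sum]
    calc _ = (6 * ∑ α ∈ D.Rpos, D.k α * ‖α‖ + ‖rhoHO D‖ + 2) * (1 / (2 * Bc)) := by ring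
      _ ≤ Bc * (1 / (2 * Bc)) := by gcongr; linarith
      _ = 1 / 2 := hη

theorem half_le_abs_inner_of_near {α x y : E} {η τ : ℝ} (hα : ‖α‖ * η ≤ 1 / 2) (hτ : 0 ≤ τ)
    (hy : ‖y - x‖ ≤ η * τ) (hx : τ < |⟪α, x⟫|) : τ / 2 ≤ |⟪α, y⟫| := by
  have h1 : |⟪α, y⟫ - ⟪α, x⟫| ≤ τ / 2 := by
    rw [← inner_sub_right]
    refine (abs_real_inner_le_norm _ _).trans ?_
    calc ‖α‖ * ‖y - x‖ ≤ ‖α‖ * (η * τ) := by gcongr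
      _ = ‖α‖ * η * τ := by ring
      _ ≤ 1 / 2 * τ := by gcongr
      _ = τ / 2 := by ring
  have h2 := abs_sub_abs_le_abs_sub ⟪α, x⟫ ⟪α, y⟫
  rw [abs_sub_comm] at h2
  linarith

/-- The space derivatives of Opdam functions are controlled by the majorant. -/
theorem exists_norm_iteratedFDeriv_le [Fintype (weylGroup D)] {G₀ : E → ℝ}
    (hG₀ : IsOpdamR D 0 G₀) (N : ℕ) :
    ∃ C : ℝ, 0 ≤ C ∧ ∀ (l₁ l₂ : E) (G : E → ℂ), IsOpdamC D l₁ l₂ G → ∀ x : E,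
      ‖iteratedFDeriv ℝ N G x‖ ≤ C * (specSize l₁ l₂ ^ N * majorantHO D G₀ l₁ x) := by
  induction N using Nat.strong_induction_on with
  | _ N ih =>
  rcases Nat.eq_zero_or_pos N with rfl | hN
  · refine ⟨Fintype.card (weylGroup D), by positivity, fun l₁ l₂ G hG x => ?_⟩
    simpa using hG.norm_le_majorantHO hG₀ x
  have ih' : ∀ j, ∃ C : ℝ, 0 ≤ C ∧ (j < N → ∀ (l₁ l₂ : E) (G : E → ℂ), IsOpdamC D l₁ l₂ G →
      ∀ x : E, ‖iteratedFDeriv ℝ j G x‖ ≤ C * (specSize l₁ l₂ ^ j * majorantHO D G₀ l₁ x)) := by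
    intro j
    by_cases hj : j < N
    · obtain ⟨C, hC, h⟩ := ih j hj
      exact ⟨C, hC, fun _ => h⟩
    · exact ⟨0, le_rfl, fun h => absurd h hj⟩
  choose B hB0 hB using ih'
  choose Kc hKc0 hKc using exists_iteratedFDeriv_coefHO_le D
  obtain ⟨η, hη0, hη1, hηα, hηsum⟩ := exists_absorption_scale D
  obtain ⟨c, hc, hcenter⟩ := exists_center D hη0
  let K : ℕ → ℝ := fun j => Kc j * c⁻¹ ^ j + (‖rhoHO D‖ + 2)
  have hK0 : ∀ j, 0 ≤ K j := fun j => by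
    have := hKc0 j
    positivity
  let S := (2 * (D.Rpos.card : ℝ) + 1) *
    ∑ i ∈ Finset.range N, (N.choose (i + 1) : ℝ) * K (i + 1) * B (N - (i + 1))
  have hS : 0 ≤ S := mul_nonneg (by positivity) (Finset.sum_nonneg fun i _ =>
    mul_nonneg (mul_nonneg (by positivity) (hK0 _)) (hB0 _))
  refine ⟨2 * (S * Real.exp (‖rhoHO D‖ + 1)), by positivity, fun l₁ l₂ G hG x => ?_⟩
  set Λ := specSize l₁ l₂ with hΛdef
  have hΛ1 : 1 ≤ Λ := one_le_specSize l₁ l₂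
  have hΛ0 : 0 < Λ := by linarith
  obtain ⟨p, τ, hcτ, hτΛ, hxp, hroots⟩ := hcenter Λ⁻¹ (by positivity) x
  have hτ : 0 < τ := lt_of_lt_of_le (by positivity) hcτ
  have hτ1 : τ ≤ 1 := hτΛ.trans (inv_le_one_of_one_le₀ hΛ1)
  have hΛτ : Λ * τ ≤ 1 := by
    calc Λ * τ ≤ Λ * Λ⁻¹ := by gcongr
      _ = 1 := mul_inv_cancel₀ hΛ0.ne'
  have hητ : η * τ ≤ τ := mul_le_of_le_one_left hτ.le hη1
  have hτinv : τ⁻¹ ≤ c⁻¹ * Λ := by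
    calc τ⁻¹ ≤ (c * Λ⁻¹)⁻¹ := inv_anti₀ (by positivity) hcτ
      _ = c⁻¹ * Λ := by rw [mul_inv, inv_inv]
  have hspec := norm_specCLM_rho_le (D := D) l₁ l₂
  rw [← hΛdef] at hspec
  let m := Real.exp (‖rhoHO D‖ + 1) * majorantHO D G₀ l₁ x
  have hm : 0 ≤ m := mul_nonneg (Real.exp_pos _).le (hG₀.majorantHO_pos l₁ x).le
  refine ContinuousMultilinearMap.opNorm_le_bound (mul_nonneg (by positivity)
    (mul_nonneg (by positivity) (hG₀.majorantHO_pos l₁ x).le)) fun ξ => ?_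
  have key := norm_le_of_euler_system (D := D)
    (u := fun w z => iteratedFDeriv ℝ N (fun z => G (w.1 z)) z ξ)
    (fun w => (contDiff_iteratedFDeriv_apply (contDiff_comp_weyl hG.contDiff w) ξ).differentiable
      (by simp)) (p := p) (x := x) hN (δ := fun α => 3 * (D.k α * ‖α‖) * η)
    (Q := S * (Λ ^ N * m) * ∏ i, ‖ξ i‖)
    (fun α hα => by
      have := (D.k_pos α (D.pos_subset hα)).le
      positivity)
    (fun w y hy => ?_) 1
  · refine key.trans (le_of_eq ?_)
    simp only [m]
    ring
  obtain ⟨t, ht, rfl⟩ := hy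
  set y := p + t • (x - p) with hy
  have hyp : ‖y - p‖ ≤ η * τ := by
    rw [hy, add_sub_cancel_left, norm_smul, Real.norm_of_nonneg ht.1]
    exact (mul_le_of_le_one_left (norm_nonneg _) ht.2).trans hxp
  have hyx : ‖y - x‖ ≤ η * τ := by
    have h1 : y - x = (t - 1) • (x - p) := by
      rw [hy, sub_smul, one_smul]
      abel
    rw [h1, norm_smul, Real.norm_eq_abs]
    refine (mul_le_of_le_one_left (norm_nonneg _) ?_).trans hxp
    rw [abs_le]
    constructor <;> linarith [ht.1, ht.2]
  have hydom : ∀ α ∈ D.R, ⟪α, p⟫ = 0 ∨ τ / 2 ≤ |⟪α, y⟫| := fun α hα =>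
    (hroots α hα).imp id fun h => half_le_abs_inner_of_near (hηα α hα) hτ.le hyx h
  have hwdom : ∀ α ∈ D.R, ⟪α, w.1 p⟫ = 0 ∨ τ / 2 ≤ |⟪α, w.1 y⟫| := fun α hα => by
    rw [inner_weyl_apply, inner_weyl_apply]
    exact hydom _ (weylGroup_inv_mem w α hα)
  have hwyp : ‖w.1 y - w.1 p‖ ≤ η * τ := by
    rwa [← map_sub, norm_weyl_apply]
  have hmy : majorantHO D G₀ l₁ y ≤ m := by
    have h1 : ‖y - x‖ ≤ τ := hyx.trans hητ
    refine hG₀.majorantHO_le_of_norm_sub_le (h1.trans hτ1) ?_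
    have h2 := norm_fst_le_specSize l₁ l₂
    calc ‖l₁‖ * ‖y - x‖ ≤ Λ * τ := by gcongr; linarith
      _ ≤ 1 := hΛτ
  have hcoef : ∀ α ∈ D.Rpos, ∀ i,
      ‖iteratedFDeriv ℝ (i + 1) (coefHO D (w.1 p) α) (w.1 y)‖ ≤ K (i + 1) * Λ ^ (i + 1) := by
    intro α hα i
    have h1 := hKc (i + 1) α hα (w.1 p) (w.1 y) τ⁻¹ ((one_le_inv₀ hτ).2 hτ1)
      (by
        rw [inv_inv, ← inner_sub_right]
        refine (abs_real_inner_le_norm _ _).trans ?_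
        calc ‖α‖ * ‖w.1 y - w.1 p‖ ≤ ‖α‖ * (η * τ) := by gcongr
          _ = ‖α‖ * η * τ := by ring
          _ ≤ 1 * τ := by
            gcongr
            linarith [hηα α (D.pos_subset hα)]
          _ = τ := one_mul _)
      (by rw [inv_inv]; exact hwdom α (D.pos_subset hα))
    calc _ ≤ Kc (i + 1) * τ⁻¹ ^ (i + 1) := h1
      _ ≤ Kc (i + 1) * (c⁻¹ * Λ) ^ (i + 1) := by
        have := hKc0 (i + 1)
        gcongr
      _ = Kc (i + 1) * c⁻¹ ^ (i + 1) * Λ ^ (i + 1) := by rw [mul_pow]; ring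
      _ ≤ K (i + 1) * Λ ^ (i + 1) := by
        gcongr
        exact le_add_of_nonneg_right (by positivity)
  have hL : ∀ i, ‖specCLM (rhoHO D + l₁) l₂‖ ≤ K (i + 1) * Λ ^ (i + 1) := by
    intro i
    have h1 : Λ ≤ Λ ^ (i + 1) := le_self_pow₀ hΛ1 (Nat.succ_ne_zero i)
    have h2 : ‖rhoHO D‖ + 2 ≤ K (i + 1) := by
      have := hKc0 (i + 1)
      exact le_add_of_nonneg_left (by positivity)
    exact hspec.trans (mul_le_mul h2 h1 hΛ0.le (hK0 _))
  have hlow : ∀ v : weylGroup D, ∀ j < N,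
      ‖iteratedFDeriv ℝ j G (v.1 y)‖ ≤ B j * (Λ ^ j * m) := by
    intro v j hj
    refine (hB j hj l₁ l₂ G hG (v.1 y)).trans ?_
    have h1 := (hG₀.majorantHO_weyl_apply_le l₁ v y).trans hmy
    have := hB0 j
    gcongr
  obtain ⟨e, heq, he⟩ := hG.exists_iteratedFDeriv_euler w
    (fun α hα => (hydom α hα).imp id fun h => abs_pos.1 (by linarith)) N hΛ0.le hK0 hcoef hL hlow ξ
  refine ⟨fun α => coefHO D (w.1 p) α (w.1 y), specCLM (rhoHO D + l₁) l₂ (w.1 (y - p)), e, heq,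
    fun α hα => coefHO_nonneg_or_abs_le hα hτ hτ1 hη0.le hwyp (hwdom α (D.pos_subset hα)), ?_, he⟩
  have hb : ‖specCLM (rhoHO D + l₁) l₂ (w.1 (y - p))‖ ≤ (‖rhoHO D‖ + 2) * η := by
    refine (ContinuousLinearMap.le_opNorm _ _).trans ?_
    rw [norm_weyl_apply]
    calc _ ≤ (‖rhoHO D‖ + 2) * Λ * (η * τ) := by gcongr
      _ = (‖rhoHO D‖ + 2) * η * (Λ * τ) := by ring
      _ ≤ (‖rhoHO D‖ + 2) * η * 1 := by gcongr
      _ = (‖rhoHO D‖ + 2) * η := mul_one _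
  linarith

end SpaceEstimate

section SpectralEstimate

open scoped ContDiff Topology

theorem norm_sub_sub_smul_deriv_le {φ φ' φ'' : ℝ → ℂ} (h1 : ∀ t, HasDerivAt φ (φ' t) t)
    (h2 : ∀ t, HasDerivAt φ' (φ'' t) t) {A h : ℝ} (hA : ∀ t ∈ Set.Icc (0 : ℝ) 1, ‖φ'' t‖ ≤ A)
    (h0 : 0 ≤ h) (hh : h ≤ 1) : ‖φ h - φ 0 - h • φ' 0‖ ≤ A * h * h := by
  have hA0 : 0 ≤ A := (norm_nonneg _).trans (hA 0 (by simp))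
  have h3 : ∀ t ∈ Set.Icc (0 : ℝ) h, ‖φ' t - φ' 0‖ ≤ A * h := by
    intro t ht
    have h4 := (convex_Icc (0 : ℝ) 1).norm_image_sub_le_of_norm_hasDerivWithin_le
      (fun s _ => (h2 s).hasDerivWithinAt) hA (x := 0) (y := t) (by simp)
      ⟨ht.1, ht.2.trans hh⟩
    rw [sub_zero, Real.norm_of_nonneg ht.1] at h4
    exact h4.trans (mul_le_mul_of_nonneg_left ht.2 hA0)
  have h5 : ∀ t, HasDerivAt (fun t => φ t - t • φ' 0) (φ' t - φ' 0) t := fun t => by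
    simpa using (h1 t).fun_sub ((hasDerivAt_id t).smul_const (φ' 0))
  have h6 := (convex_Icc (0 : ℝ) h).norm_image_sub_le_of_norm_hasDerivWithin_le
    (fun s _ => (h5 s).hasDerivWithinAt) h3 (x := 0) (y := h) ⟨le_rfl, h0⟩ ⟨h0, le_rfl⟩
  rw [sub_zero, Real.norm_of_nonneg h0, zero_smul, sub_zero, sub_right_comm] at h6
  exact h6

theorem HolCR.of_norm_sub_le {F : ℕ → E × E → ℂ} {f : E × E → ℂ} (hF : ∀ n, HolCR (F n))
    (h : ∀ R : ℝ, ∃ A : ℝ, ∀ (n : ℕ) (q : E × E), ‖q‖ ≤ R → ‖F n q - f q‖ ≤ A * (1 / (n + 1))) :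
    HolCR f := by
  refine HolCR.of_tendsto hF (fun R ε hε => ?_) fun p => ?_
  · obtain ⟨A, hA⟩ := h R
    have hlim : Filter.Tendsto (fun n : ℕ => A * (1 / ((n : ℝ) + 1))) Filter.atTop (𝓝 0) := by
      simpa using tendsto_one_div_add_atTop_nhds_zero_nat.const_mul A
    obtain ⟨n₀, hn₀⟩ := Filter.eventually_atTop.1
      (hlim.eventually (gt_mem_nhds (half_pos hε)))
    refine ⟨n₀, fun n hn m hm p hp => ?_⟩
    have h1 := hA n p hp
    have h2 := hA m p hp
    have h3 := hn₀ n hn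
    have h4 := hn₀ m hm
    have h5 := norm_sub_le (F n p - f p) (F m p - f p)
    rw [sub_sub_sub_cancel_right] at h5
    linarith
  · obtain ⟨A, hA⟩ := h ‖p‖
    rw [tendsto_iff_norm_sub_tendsto_zero]
    refine squeeze_zero (fun _ => norm_nonneg _) (fun n => hA n p le_rfl) ?_
    simpa using tendsto_one_div_add_atTop_nhds_zero_nat.const_mul A

variable {D : HOData E} [Fintype (weylGroup D)]

theorem maxW_le_norm_mul_norm (l x : E) : maxW D l x ≤ ‖l‖ * ‖x‖ := by
  have h := maxW_le_add_norm_left D 0 l x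
  have h0 : maxW D 0 x = 0 := by simp [maxW]
  rwa [h0, zero_add, sub_zero] at h

/-- Space derivatives are bounded locally uniformly in the spectral parameter. -/
theorem exists_norm_iteratedFDeriv_le_on_ball {G : E → E → E → ℂ}
    (hG : ∀ l₁ l₂, IsOpdamC D l₁ l₂ (G l₁ l₂)) {G₀ : E → ℝ} (hG₀ : IsOpdamR D 0 G₀) (N : ℕ)
    (R S : ℝ) : ∃ A : ℝ, 0 ≤ A ∧ ∀ q : E × E, ‖q‖ ≤ R → ∀ x : E, ‖x‖ ≤ S →
      ‖iteratedFDeriv ℝ N (G q.1 q.2) x‖ ≤ A := by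
  obtain ⟨C, hC, h⟩ := exists_norm_iteratedFDeriv_le hG₀ N
  have hF0 := (hG₀.Fsym_pos 0).le
  refine ⟨C * ((1 + |R| + |R|) ^ N * (Real.exp (‖rhoHO D‖ * S) * Fsym D G₀ 0 * Real.exp (|R| * S))),
    by positivity, fun q hq x hx => ?_⟩
  have hq1 : ‖q.1‖ ≤ |R| := (norm_fst_le q).trans (hq.trans (le_abs_self R))
  have hq2 : ‖q.2‖ ≤ |R| := (norm_snd_le q).trans (hq.trans (le_abs_self R))
  refine (h q.1 q.2 _ (hG q.1 q.2) x).trans ?_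
  have h1 : specSize q.1 q.2 ≤ 1 + |R| + |R| := (specSize_le_add _ _).trans (by gcongr)
  have h2 : Fsym D G₀ x ≤ Real.exp (‖rhoHO D‖ * S) * Fsym D G₀ 0 := by
    refine (hG₀.Fsym_le_exp_mul 0 x).trans ?_
    rw [sub_zero]
    gcongr
  have h3 : maxW D q.1 x ≤ |R| * S := (maxW_le_norm_mul_norm q.1 x).trans (by gcongr)
  have h4 : 0 ≤ specSize q.1 q.2 := zero_le_one.trans (one_le_specSize _ _)
  have h5 := (hG₀.Fsym_pos x).le
  rw [majorantHO]
  gcongr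

theorem hasDerivAt_iteratedFDeriv_line {g : E → ℂ} (hg : ContDiff ℝ ∞ g) {N : ℕ} (x : E)
    (ξ : Fin (N + 1) → E) (t : ℝ) :
    HasDerivAt (fun t : ℝ => iteratedFDeriv ℝ N g (x + t • ξ 0) (Fin.tail ξ))
      (iteratedFDeriv ℝ (N + 1) g (x + t • ξ 0) ξ) t := by
  have hline : HasDerivAt (fun t : ℝ => x + t • ξ 0) (ξ 0) t := by
    simpa using ((hasDerivAt_id t).smul_const (ξ 0)).const_add x
  rw [iteratedFDeriv_succ_apply_eq hg]
  exact ((contDiff_iteratedFDeriv_apply hg (Fin.tail ξ)).differentiable (by simp)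
    (x + t • ξ 0)).hasFDerivAt.comp_hasDerivAt t hline

/-- Space derivatives of Opdam functions are holomorphic in the spectral parameter. -/
theorem holCR_iteratedFDeriv {G : E → E → E → ℂ}
    (hG : ∀ l₁ l₂, IsOpdamC D l₁ l₂ (G l₁ l₂)) (hol : ∀ x, HolCR fun q : E × E => G q.1 q.2 x)
    {G₀ : E → ℝ} (hG₀ : IsOpdamR D 0 G₀) (N : ℕ) (x : E) (ξ : Fin N → E) :
    HolCR fun q : E × E => iteratedFDeriv ℝ N (G q.1 q.2) x ξ := by
  induction N generalizing x with
  | zero => simpa using hol x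
  | succ N ih =>
    let f : E → E × E → ℂ := fun y q => iteratedFDeriv ℝ N (G q.1 q.2) y (Fin.tail ξ)
    refine HolCR.of_norm_sub_le (F := fun n q => ((n + 1 : ℝ) : ℂ) *
      (f (x + (1 / ((n : ℝ) + 1)) • ξ 0) q - f x q))
      (fun n => ((ih _ _).sub (ih _ _)).const_mul _) fun R => ?_
    obtain ⟨A, hA0, hA⟩ :=
      exists_norm_iteratedFDeriv_le_on_ball hG hG₀ (N + 2) R (‖x‖ + ‖ξ 0‖)
    let ζ : Fin (N + 2) → E := Fin.cons (ξ 0) ξ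
    refine ⟨A * ∏ i, ‖ζ i‖, fun n q hq => ?_⟩
    have hg := (hG q.1 q.2).contDiff
    have hn : (0 : ℝ) < (n : ℝ) + 1 := by positivity
    set h := 1 / ((n : ℝ) + 1) with hh
    have hnh : ((n : ℝ) + 1) * h = 1 := by rw [hh]; field_simp
    have h0 : 0 ≤ h := by positivity
    have h1 : h ≤ 1 := by
      rw [hh, div_le_one hn]
      linarith [(Nat.cast_nonneg n : (0 : ℝ) ≤ n)]
    have hζ : ∀ t : ℝ, HasDerivAt (fun t : ℝ => iteratedFDeriv ℝ (N + 1) (G q.1 q.2)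
        (x + t • ξ 0) ξ) (iteratedFDeriv ℝ (N + 2) (G q.1 q.2) (x + t • ξ 0) ζ) t :=
      hasDerivAt_iteratedFDeriv_line hg x ζ
    have hbound := norm_sub_sub_smul_deriv_le (A := A * ∏ i, ‖ζ i‖)
      (hasDerivAt_iteratedFDeriv_line hg x ξ) hζ (fun t ht => by
        refine (ContinuousMultilinearMap.le_opNorm _ _).trans ?_
        gcongr
        refine hA q hq _ ((norm_add_le _ _).trans ?_)
        rw [norm_smul, Real.norm_of_nonneg ht.1]
        gcongr
        exact mul_le_of_le_one_left (norm_nonneg _) ht.2) h0 h1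
    rw [zero_smul, add_zero] at hbound
    have hfac : ((n + 1 : ℝ) : ℂ) * (f (x + h • ξ 0) q - f x q) -
        iteratedFDeriv ℝ (N + 1) (G q.1 q.2) x ξ = ((n + 1 : ℝ) : ℂ) *
        (f (x + h • ξ 0) q - f x q - h • iteratedFDeriv ℝ (N + 1) (G q.1 q.2) x ξ) := by
      have h2 : ((n + 1 : ℝ) : ℂ) * (h : ℂ) = 1 := by exact_mod_cast hnh
      rw [Complex.real_smul, mul_sub _ _ ((h : ℂ) * _), ← mul_assoc _ (h : ℂ), h2, one_mul]
    rw [hfac, norm_mul, Complex.norm_real, Real.norm_of_nonneg hn.le]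
    calc _ ≤ ((n : ℝ) + 1) * (A * (∏ i, ‖ζ i‖) * h * h) := by gcongr
      _ = A * (∏ i, ‖ζ i‖) * h * (((n : ℝ) + 1) * h) := by ring
      _ = A * (∏ i, ‖ζ i‖) * h := by rw [hnh, mul_one]

theorem specSize_le_mul_of_norm_sub_le {l₁ l₂ : E} {q : E × E} {r : ℝ}
    (hq : ‖q - (l₁, l₂)‖ ≤ r) : specSize q.1 q.2 ≤ (2 + 2 * r) * specSize l₁ l₂ := by
  have hr : 0 ≤ r := (norm_nonneg _).trans hq
  have h1 : ‖q.1 - l₁‖ ≤ r := (norm_fst_le (q - (l₁, l₂))).trans hq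
  have h2 : ‖q.2 - l₂‖ ≤ r := (norm_snd_le (q - (l₁, l₂))).trans hq
  have h3 := norm_le_norm_add_norm_sub l₁ q.1
  have h4 := norm_le_norm_add_norm_sub l₂ q.2
  rw [norm_sub_rev] at h3 h4
  have h5 := specSize_le_add q.1 q.2
  have h6 := norm_fst_le_specSize l₁ l₂
  have h7 := norm_snd_le_specSize l₁ l₂
  have h8 : 2 * r * 1 ≤ 2 * r * specSize l₁ l₂ := by
    gcongr
    exact one_le_specSize l₁ l₂
  linarith

/-- Mixed spectral and space derivatives of Opdam functions. -/
theorem exists_norm_iteratedFDeriv_iteratedFDeriv_le {G : E → E → E → ℂ}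
    (hG : ∀ l₁ l₂, IsOpdamC D l₁ l₂ (G l₁ l₂)) (hol : ∀ x, HolCR fun q : E × E => G q.1 q.2 x)
    {G₀ : E → ℝ} (hG₀ : IsOpdamR D 0 G₀) (M N : ℕ) :
    ∃ C : ℝ, 0 < C ∧ ∀ (l₁ l₂ x : E) (η : Fin M → E) (ξ : Fin N → E),
      (∀ i, ‖η i‖ = 1) → (∀ i, ‖ξ i‖ = 1) →
      ‖iteratedFDeriv ℝ M (fun l => iteratedFDeriv ℝ N (G l l₂) x ξ) l₁ η‖ ≤
        C * (1 + ‖x‖) ^ M * specSize l₁ l₂ ^ N * Fsym D G₀ x * Real.exp (maxW D l₁ x) := by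
  obtain ⟨C, hC, h⟩ := exists_norm_iteratedFDeriv_le hG₀ N
  refine ⟨(C + 1) * (2 + 2 * M) ^ N * Real.exp M, by positivity,
    fun l₁ l₂ x η ξ hη hξ => ?_⟩
  have hx : 0 < 1 + ‖x‖ := by positivity
  have hF := (hG₀.Fsym_pos x).le
  have hs1 : (1 + ‖x‖)⁻¹ ≤ 1 := inv_le_one_of_one_le₀ (by linarith [norm_nonneg x])
  have hsx : (1 + ‖x‖)⁻¹ * ‖x‖ ≤ 1 := by
    rw [inv_mul_le_one₀ hx]
    linarith
  have hM : (0 : ℝ) ≤ M := Nat.cast_nonneg M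
  have key := (holCR_iteratedFDeriv hG hol hG₀ N x ξ).norm_iteratedFDeriv_le (l1 := l₁) (l2 := l₂)
    hη (s := (1 + ‖x‖)⁻¹)
    (B := (C + 1) * (((2 + 2 * M) * specSize l₁ l₂) ^ N *
      (Fsym D G₀ x * Real.exp (maxW D l₁ x + M)))) (by positivity) fun q hq => by
    have h1 : specSize q.1 q.2 ≤ (2 + 2 * M) * specSize l₁ l₂ :=
      specSize_le_mul_of_norm_sub_le (hq.trans (mul_le_of_le_one_right hM hs1))
    have h2 : maxW D q.1 x ≤ maxW D l₁ x + M := by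
      refine (maxW_le_add_norm_left D l₁ q.1 x).trans (add_le_add_right ?_ _)
      calc ‖q.1 - l₁‖ * ‖x‖ ≤ M * (1 + ‖x‖)⁻¹ * ‖x‖ := by
            gcongr
            exact (norm_fst_le (q - (l₁, l₂))).trans hq
        _ = M * ((1 + ‖x‖)⁻¹ * ‖x‖) := by ring
        _ ≤ M := mul_le_of_le_one_right hM hsx
    have h3 : 0 ≤ specSize q.1 q.2 := zero_le_one.trans (one_le_specSize _ _)
    refine (ContinuousMultilinearMap.le_opNorm _ _).trans ?_
    rw [Finset.prod_eq_one fun i _ => hξ i, mul_one]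
    refine (h q.1 q.2 _ (hG q.1 q.2) x).trans ?_
    have h4 : 0 ≤ (2 + 2 * M) * specSize l₁ l₂ := h3.trans h1
    rw [majorantHO]
    gcongr
    linarith
  refine key.trans (le_of_eq ?_)
  rw [inv_pow, div_inv_eq_mul, mul_pow, Real.exp_add]
  ring

end SpectralEstimate

/-- assuming moreover that `λ ↦ G_λ(x)` is holomorphic on `h`
(real-analytic on `a × a` and satisfying the Cauchy–Riemann equations), for all `M, N`
there is `C > 0` such that, for unit directions `η₁,…,η_M` in the spectral variable and
`ξ₁,…,ξ_N` in the space variable,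
`|∂^{(λ)}_{η₁} ⋯ ∂^{(λ)}_{η_M} ∂^{(x)}_{ξ₁} ⋯ ∂^{(x)}_{ξ_N} G_λ(x)|
  ≤ C (1+|x|)^M (1+|λ|)^N F₀(x) e^{max_w Re (wλ, x)}`. -/
theorem statement16 (D : HOData E) [Fintype (weylGroup D)]
    (G : E → E → E → ℂ) (hG : ∀ l1 l2, IsOpdamC D l1 l2 (G l1 l2))
    (hol : ∀ x : E, AnalyticOnNhd ℝ (fun p : E × E => G p.1 p.2 x) Set.univ ∧
      ∀ (p : E × E) (η : E),
        fderiv ℝ (fun q : E × E => G q.1 q.2 x) p (0, η)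
          = Complex.I * fderiv ℝ (fun q : E × E => G q.1 q.2 x) p (η, 0))
    (Gzero : E → ℝ) (hG0 : IsOpdamR D 0 Gzero) (M N : ℕ) :
    ∃ C : ℝ, 0 < C ∧ ∀ (l1 l2 x : E) (η : Fin M → E) (ξ : Fin N → E),
      (∀ i, ‖η i‖ = 1) → (∀ i, ‖ξ i‖ = 1) →
      ‖iteratedFDeriv ℝ M (fun l => iteratedFDeriv ℝ N (G l l2) x ξ) l1 η‖ ≤
        C * (1 + ‖x‖) ^ M * (1 + Real.sqrt (‖l1‖ ^ 2 + ‖l2‖ ^ 2)) ^ N *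
          Fsym D Gzero x * Real.exp (maxW D l1 x) := by
  exact exists_norm_iteratedFDeriv_iteratedFDeriv_le hG
    (fun x => ⟨contDiff_iff_contDiffAt.2 fun p => ((hol x).1 p (Set.mem_univ p)).contDiffAt,
      (hol x).2⟩) hG0 M N
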